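/- Let (R, m) be an analytically unramified Noetherian local ring with conductor ideal 𝔠, and suppose R satisfies Serre's condition (S2), i.e. depth(R_p) ≥ min{2, height(p)} for every prime ideal p. If the i-fold tensor power 𝔠^{⊗i} = 𝔠 ⊗_R ⋯ ⊗_R 𝔠 is a torsion-free R-module for some i > 1 (no nonzero element of 𝔠^{⊗i} is annihilated by a nonzerodivisor of R), then 𝔠 is a free R-module and R is normal. -/

import Mathlib

open CategoryTheory IsLocalRing

set_option synthInstance.maxHeartbeats 1000000
set_option maxHeartbeats 1000000

noncomputable section

/-- The integral closure `R̄` of `R` in its total ring of fractions, viewed as a type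
(with its canonical `R`-algebra and `R`-module structures). -/
abbrev IntClosure (R : Type) [CommRing R] : Type :=
  ↥(integralClosure R (FractionRing R))

/-- The quotient `R`-module `R̄/R`. -/
abbrev IntClosureQuot (R : Type) [CommRing R] : Type :=
  IntClosure R ⧸ LinearMap.range (Algebra.linearMap R (IntClosure R))

/-- The conductor ideal `𝔠 = Ann_R(R̄/R) = {r : R | r • R̄ ⊆ R}`. -/
def conductorIdeal (R : Type) [CommRing R] : Ideal R :=
  Module.annihilator R (IntClosureQuot R)

/-- A local ring `R` is analytically unramified if its `m`-adic completion is reduced. -/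
def AnalyticallyUnramified (R : Type) [CommRing R] [IsLocalRing R] : Prop :=
  IsReduced (AdicCompletion (maximalIdeal R) R)

/-- `R` is normal: it is reduced and equal to its integral closure `R̄` in its total
ring of fractions. -/
def IsNormalRing (R : Type) [CommRing R] : Prop :=
  IsReduced R ∧ integralClosure R (FractionRing R) = ⊥

/-- `Ext^i_R(M, N)` as a type. -/
abbrev ExtMod (R : Type) [CommRing R] (M : Type) [AddCommGroup M] [Module R M]
    (N : Type) [AddCommGroup N] [Module R N] (i : ℕ) : Type :=
  ↥(((Ext R (ModuleCat.{0} R) i).obj (Opposite.op (ModuleCat.of R M))).obj (ModuleCat.of R N))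

/-- `M` has finite projective dimension over `R`:
`Ext^i_R(M, -)` vanishes for all `i` bigger than some `n`. -/
def HasFiniteProjDim (R : Type) [CommRing R] (M : Type) [AddCommGroup M] [Module R M] : Prop :=
  ∃ n : ℕ, ∀ (N : ModuleCat.{0} R) (i : ℕ), n < i →
    Subsingleton ↥(((Ext R (ModuleCat.{0} R) i).obj (Opposite.op (ModuleCat.of R M))).obj N)

/-- `M` has finite injective dimension over `R`:
`Ext^i_R(-, M)` vanishes for all `i` bigger than some `n`. -/
def HasFiniteInjDim (R : Type) [CommRing R] (M : Type) [AddCommGroup M] [Module R M] : Prop :=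
  ∃ n : ℕ, ∀ (N : ModuleCat.{0} R) (i : ℕ), n < i →
    Subsingleton ↥(((Ext R (ModuleCat.{0} R) i).obj (Opposite.op N)).obj (ModuleCat.of R M))

/-- The depth of an `R`-module `M` over a local ring `(R, m)`: the least `i` such that
`Ext^i_R(R/m, M) ≠ 0` (`⊤` if there is no such `i`), valued in `WithBot (WithTop ℕ)`
for easy comparison with `ringKrullDim`. -/
def moduleDepth (R : Type) [CommRing R] [IsLocalRing R]
    (M : Type) [AddCommGroup M] [Module R M] : WithBot (WithTop ℕ) :=
  sInf { n : WithBot (WithTop ℕ) |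
    ∃ i : ℕ, n = (i : ℕ) ∧ Nontrivial (ExtMod R (ResidueField R) M i) }

/-- A Noetherian local ring is Gorenstein if it has finite injective dimension
as a module over itself. -/
def IsGorensteinLocal (R : Type) [CommRing R] [IsLocalRing R] : Prop :=
  IsNoetherianRing R ∧ HasFiniteInjDim R R

/-- A Noetherian local ring is Cohen–Macaulay if its depth equals its Krull dimension. -/
def IsCohenMacaulayLocal (R : Type) [CommRing R] [IsLocalRing R] : Prop :=
  IsNoetherianRing R ∧ moduleDepth R R = ringKrullDim R

/-- A ring is Cohen–Macaulay if it is Noetherian and all its localizations at primes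
are Cohen–Macaulay local rings. -/
def IsCohenMacaulayRing (A : Type) [CommRing A] : Prop :=
  IsNoetherianRing A ∧ ∀ (p : Ideal A) [p.IsPrime],
    moduleDepth (Localization.AtPrime p) (Localization.AtPrime p) =
      ringKrullDim (Localization.AtPrime p)

/-- Serre's condition `(S2)`: `depth (R_p) ≥ min {2, height p}` for every prime `p`
(`height p` being the dimension of `R_p`). -/
def SerreS2 (R : Type) [CommRing R] : Prop :=
  ∀ (p : Ideal R) [p.IsPrime],
    min 2 (ringKrullDim (Localization.AtPrime p)) ≤
      moduleDepth (Localization.AtPrime p) (Localization.AtPrime p)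

/-- A Noetherian local ring is regular if its maximal ideal can be generated by
`dim R` elements. -/
def IsRegularLocal (A : Type) [CommRing A] [IsLocalRing A] : Prop :=
  IsNoetherianRing A ∧ ∃ s : Finset A, Ideal.span (s : Set A) = maximalIdeal A ∧
    (s.card : WithBot (WithTop ℕ)) = ringKrullDim A

/-- Serre's condition `(R1)`: `R_p` is regular for every prime `p` of height at most `1`. -/
def SerreR1 (R : Type) [CommRing R] : Prop :=
  ∀ (p : Ideal R) [p.IsPrime], ringKrullDim (Localization.AtPrime p) ≤ 1 →
    IsRegularLocal (Localization.AtPrime p)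

/-- The `i`-th local cohomology `H^i_m(M)` of `M` with support in the maximal ideal,
as a type. -/
abbrev localCohMod (R : Type) [CommRing R] [IsLocalRing R] (i : ℕ)
    (M : Type) [AddCommGroup M] [Module R M] : Type :=
  ↥((localCohomology (maximalIdeal R) i).obj (ModuleCat.of R M))

/-- `x : Fin d → R` is a system of parameters for the local ring `(R, m)`:
`d = dim R`, all `x i` lie in `m`, and the ideal they generate is `m`-primary
(its radical is `m`). -/
def IsSystemOfParameters (R : Type) [CommRing R] [IsLocalRing R] {d : ℕ}
    (x : Fin d → R) : Prop :=
  (d : WithBot (WithTop ℕ)) = ringKrullDim R ∧ (∀ i, x i ∈ maximalIdeal R) ∧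
    (Ideal.span (Set.range x)).radical = maximalIdeal R

/-- `E` is an injective hull of the residue field of the local ring `R`:
`E` is injective and contains a copy of `R/m` as an essential submodule. -/
def IsInjectiveHullOfResidueField (R : Type) [CommRing R] [IsLocalRing R]
    (E : Type) [AddCommGroup E] [Module R E] : Prop :=
  Module.Injective R E ∧ ∃ f : ResidueField R →ₗ[R] E, Function.Injective f ∧
    ∀ N : Submodule R E, N ≠ ⊥ → N ⊓ LinearMap.range f ≠ ⊥


section

theorem precomplete_fin {R : Type} [CommRing R] (I : Ideal R) [IsPrecomplete I R] (n : ℕ) :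
    IsPrecomplete I (Fin n → R) := by
  refine ⟨fun f hf => ?_⟩
  have key : ∀ (m : ℕ) (x : Fin n → R), x ∈ (I ^ m • ⊤ : Submodule R (Fin n → R)) ↔
      ∀ i, x i ∈ (I ^ m • ⊤ : Submodule R R) := by
    intro m x
    constructor
    · intro hx i
      have := Submodule.mem_map_of_mem (f := LinearMap.proj (R := R) (φ := fun _ : Fin n => R) i) hx
      rw [Submodule.map_smul''] at this
      exact Submodule.smul_mono le_rfl le_top this
    · intro hx
      have : x = ∑ i, x i • (Pi.single i 1 : Fin n → R) := by
        ext j; simp [Pi.single_apply]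
      rw [this]
      refine Submodule.sum_mem _ fun i _ => Submodule.smul_mem_smul ?_ trivial
      simpa using hx i
  have h1 : ∀ i, ∃ L, ∀ k, f k i ≡ L [SMOD (I ^ k • ⊤ : Submodule R R)] := by
    intro i
    refine IsPrecomplete.prec inferInstance (f := fun k => f k i) fun {a b} hab => ?_
    have := hf hab
    rw [SModEq.sub_mem, key] at this
    rw [SModEq.sub_mem]
    exact this i
  choose L hL using h1
  refine ⟨L, fun k => ?_⟩
  rw [SModEq.sub_mem, key]
  intro i
  have := hL i k
  rw [SModEq.sub_mem] at this
  exact this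

theorem finite_of_complete {R : Type} [CommRing R] (I : Ideal R) [IsPrecomplete I R]
    {M : Type} [AddCommGroup M] [Module R M] [IsHausdorff I M] (N : Submodule R M) (hN : N.FG)
    (h : ∀ x : M, ∃ y ∈ N, x - y ∈ (I • ⊤ : Submodule R M)) : Module.Finite R M := by
  obtain ⟨n, g, hg⟩ := Submodule.fg_iff_exists_fin_generating_family.mp hN
  have := precomplete_fin I n
  have hs : Function.Surjective (Fintype.linearCombination R g) := by
    apply surjective_of_mkQ_comp_surjective (I := I)
    intro z
    obtain ⟨x, rfl⟩ := Submodule.mkQ_surjective _ z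
    obtain ⟨y, hy, hxy⟩ := h x
    rw [← hg, ← Fintype.range_linearCombination R] at hy
    obtain ⟨c, rfl⟩ := hy
    refine ⟨c, ?_⟩
    simp only [LinearMap.coe_comp, Function.comp_apply, Submodule.mkQ_apply]
    rw [Submodule.Quotient.eq, ← neg_mem_iff]
    simpa using hxy
  exact Module.Finite.of_surjective _ hs

end

section

/-- Finiteness of integral closure in purely inseparable finite extensions. -/
def PI2 (p : ℕ) (R : Type) [CommRing R] : Prop :=
  ∀ (K L : Type) [Field K] [Field L] [Algebra R K] [IsFractionRing R K] [Algebra R L]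
    [Algebra K L] [IsScalarTower R K L] [FiniteDimensional K L] (e : ℕ),
    (∀ z : L, z ^ (p ^ e) ∈ Set.range (algebraMap K L)) → Module.Finite R (integralClosure R L)

theorem finite_of_rank (p : ℕ) (hp0 : p ≠ 0) {R S : Type} [CommRing R] [IsDomain R] [IsNoetherianRing R]
    (hP : PI2 p R) [CommRing S] [IsDomain S] [Algebra R S]
    (hinj : Function.Injective (algebraMap R S)) (e n : ℕ)
    (hpow : ∀ s : S, s ^ (p ^ e) ∈ Set.range (algebraMap R S))
    (hrank : ∀ s : Fin (n + 1) → S, ¬ LinearIndependent R s) : Module.Finite R S := by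
  let L := FractionRing S
  have hinjL : Function.Injective (algebraMap R L) := by
    rw [IsScalarTower.algebraMap_eq R S L]
    exact (IsFractionRing.injective S L).comp hinj
  have hfa : FaithfulSMul R L := (faithfulSMul_iff_algebraMap_injective R L).mpr hinjL
  let K := FractionRing R
  let _ : Algebra K L := FractionRing.liftAlgebra R L
  have : IsScalarTower R K L := FractionRing.isScalarTower_liftAlgebra R L
  have hfd : FiniteDimensional K L := by
    by_contra hcon
    have h1 : ((n + 1 : ℕ) : Cardinal) ≤ Module.rank K L := by
      by_contra hlt
      exact hcon (Module.rank_lt_aleph0_iff.mp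
        ((not_le.mp hlt).trans (Cardinal.natCast_lt_aleph0)))
    obtain ⟨f, hf⟩ := exists_linearIndependent_of_le_rank h1
    obtain ⟨b, hb⟩ := IsLocalization.exist_integer_multiples (nonZeroDivisors S) Finset.univ f
    choose s hs using fun i => hb i (Finset.mem_univ i)
    apply hrank s
    have hb0 : algebraMap S L b ≠ 0 := by
      simp
    let u : L →ₗ[K] L := LinearMap.mulLeft K (algebraMap S L b)
    have h2 : LinearIndependent K (fun i => u (f i)) := by
      refine hf.map' u (LinearMap.ker_eq_bot.mpr ?_)
      exact mul_right_injective₀ hb0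
    have h3 : LinearIndependent R (fun i => u (f i)) :=
      (LinearIndependent.iff_fractionRing R K).mpr h2
    refine LinearIndependent.of_comp (IsScalarTower.toAlgHom R S L).toLinearMap ?_
    have h4 : (fun i => u (f i)) = (IsScalarTower.toAlgHom R S L).toLinearMap ∘ s := by
      ext i
      simp only [Function.comp_apply, AlgHom.toLinearMap_apply, IsScalarTower.coe_toAlgHom', hs i]
      simp [u, Algebra.smul_def]
    rw [h4] at h3
    exact h3
  have hfin := hP K L e (by
    intro z
    obtain ⟨a, b, hb, rfl⟩ := IsFractionRing.div_surjective (A := S) z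
    obtain ⟨c, hc⟩ := hpow a
    obtain ⟨d, hd⟩ := hpow b
    refine ⟨algebraMap R K c / algebraMap R K d, ?_⟩
    rw [map_div₀, ← IsScalarTower.algebraMap_apply, ← IsScalarTower.algebraMap_apply, div_pow,
      ← map_pow, ← map_pow, ← hc, ← hd, ← IsScalarTower.algebraMap_apply,
      ← IsScalarTower.algebraMap_apply])
  have hint : ∀ s : S, IsIntegral R s := by
    intro s
    obtain ⟨c, hc⟩ := hpow s
    refine IsIntegral.of_pow (n := p ^ e) (pow_pos (Nat.pos_of_ne_zero hp0) _) ?_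
    rw [← hc]; exact isIntegral_algebraMap
  let g : S →ₗ[R] integralClosure R L :=
    ((IsScalarTower.toAlgHom R S L).codRestrict (integralClosure R L)
      (fun s => (hint s).map (IsScalarTower.toAlgHom R S L))).toLinearMap
  refine Module.Finite.of_injective g ?_
  intro a b hab
  have := congrArg Subtype.val hab
  exact IsFractionRing.injective S L this

theorem tateA (p : ℕ) [Fact p.Prime] {R R' : Type} [CommRing R] [IsDomain R] [IsNoetherianRing R]
    [IsIntegrallyClosed R] [CharP R p] [CommRing R'] [IsDomain R'] [IsNoetherianRing R']
    (π : R →+* R') (hπ : Function.Surjective π) (x : R) (hx0 : x ≠ 0)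
    (hker : RingHom.ker π = Ideal.span {x}) [IsAdicComplete (Ideal.span {x}) R]
    (hP : PI2 p R') (K L : Type) [Field K] [Field L] [Algebra R K] [IsFractionRing R K] [Algebra R L]
    [Algebra K L] [IsScalarTower R K L] [FiniteDimensional K L] (e : ℕ)
    (he : ∀ z : L, z ^ (p ^ e) ∈ Set.range (algebraMap K L)) (y : L)
    (hy : y ^ (p ^ e) = algebraMap R L x) : Module.Finite R (integralClosure R L) := by
  have hp : p.Prime := Fact.out
  have hq : 0 < p ^ e := pow_pos hp.pos _
  set q := p ^ e with hqdef
  have hinjRL : Function.Injective (algebraMap R L) := by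
    rw [IsScalarTower.algebraMap_eq R K L]
    exact (algebraMap K L).injective.comp (IsFractionRing.injective R K)
  have hcL : CharP L p := charP_of_injective_algebraMap hinjRL p
  -- membership in the integral closure
  have hmem : ∀ z : L, z ∈ integralClosure R L ↔ ∃ r : R, algebraMap R L r = z ^ q := by
    intro z
    constructor
    · intro hz
      obtain ⟨k, hk⟩ := he z
      have h1 : IsIntegral R (algebraMap K L k) := by
        rw [hk]; exact IsIntegral.pow hz q
      have h2 : IsIntegral R k :=
        (isIntegral_algebraMap_iff (algebraMap K L).injective).mp h1
      obtain ⟨r, hr⟩ := IsIntegrallyClosed.isIntegral_iff.mp h2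
      exact ⟨r, by rw [IsScalarTower.algebraMap_apply R K L, hr, hk]⟩
    · rintro ⟨r, hr⟩
      refine IsIntegral.of_pow hq ?_
      rw [← hr]; exact isIntegral_algebraMap
  let S := integralClosure R L
  have hyS : y ∈ S := (hmem y).mpr ⟨x, hy.symm⟩
  have hφ' : ∀ z : S, ∃ r : R, algebraMap R L r = (z : L) ^ q := fun z => (hmem z).mp z.2
  choose φ0 hφ0 using hφ'
  let φ : S →+* R :=
    { toFun := φ0
      map_one' := hinjRL (by rw [hφ0]; simp)
      map_zero' := hinjRL (by rw [hφ0]; simp [hq.ne'])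
      map_mul' := fun a b => hinjRL (by rw [map_mul, hφ0, hφ0, hφ0]; simp [mul_pow])
      map_add' := fun a b => hinjRL (by
        rw [map_add, hφ0, hφ0, hφ0]
        simp only [AddMemClass.coe_add, hqdef]
        exact add_pow_expChar_pow _ _ p e) }
  have hφ : ∀ z : S, algebraMap R L (φ z) = (z : L) ^ q := hφ0
  have hφalg : ∀ r : R, φ (algebraMap R S r) = r ^ q := fun r => hinjRL (by
    rw [hφ, map_pow]; rfl)
  have hφ0' : ∀ z : S, φ z = 0 → z = 0 := by
    intro z hz
    have := hφ z
    rw [hz, map_zero] at this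
    exact Subtype.ext (pow_eq_zero_iff hq.ne' |>.mp this.symm)
  let yS : S := ⟨y, hyS⟩
  have hy0 : y ≠ 0 := by
    rintro rfl
    rw [zero_pow hq.ne'] at hy
    exact hx0 (hinjRL (by rw [← hy, map_zero]))
  have hφy : φ yS = x := hinjRL (by rw [hφ]; exact hy)
  have hdiv : ∀ z : S, π (φ z) = 0 → ∃ w, z = yS * w := by
    intro z hz
    rw [← RingHom.mem_ker, hker, Ideal.mem_span_singleton] at hz
    obtain ⟨c, hc⟩ := hz
    have : (z : L) / y ∈ S := (hmem _).mpr ⟨c, by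
      rw [div_pow, ← hφ z, hc, hy, map_mul]
      have : algebraMap R L x ≠ 0 := by rw [← hy]; exact pow_ne_zero _ hy0
      field_simp⟩
    refine ⟨⟨_, this⟩, Subtype.ext ?_⟩
    change (z : L) = y * (z / y)
    field_simp
  let Y : Ideal S := RingHom.ker (π.comp φ)
  have hYp : Y.IsPrime := RingHom.ker_isPrime _
  let T := S ⧸ Y
  let ι : R →+* T := (Ideal.Quotient.mk Y).comp (algebraMap R S)
  have hι0 : ∀ r, ι r = 0 ↔ π r = 0 := by
    intro r
    change Ideal.Quotient.mk Y (algebraMap R S r) = 0 ↔ _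
    rw [Ideal.Quotient.eq_zero_iff_mem, RingHom.mem_ker, RingHom.comp_apply, hφalg, map_pow,
      pow_eq_zero_iff hq.ne']
  let j : R' →+* T := π.liftOfSurjective hπ ⟨ι, fun r hr => (hι0 r).mpr hr⟩
  have hj : ∀ r, j (π r) = ι r := fun r => RingHom.liftOfRightInverse_comp_apply _ _ _ _ _
  let _ : Algebra R' T := j.toAlgebra
  have hjinj : Function.Injective (algebraMap R' T) := by
    rw [injective_iff_map_eq_zero]
    intro a ha
    obtain ⟨r, rfl⟩ := hπ a
    exact (hι0 r).mp ((hj r).symm.trans ha)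
  have hTfin : Module.Finite R' T := by
    refine finite_of_rank p hp.ne_zero hP hjinj e (Module.finrank K L) ?_ ?_
    · intro s
      obtain ⟨z, rfl⟩ := Ideal.Quotient.mk_surjective s
      refine ⟨π (φ z), (hj _).trans ?_⟩
      change Ideal.Quotient.mk Y (algebraMap R S (φ z)) = _
      rw [← map_pow]
      congr 1
      exact Subtype.ext (hφ z)
    · intro s hs
      choose t ht using fun i => Ideal.Quotient.mk_surjective (s i)
      have hdep : ¬ LinearIndependent R (fun i => (t i : L)) := by
        rw [LinearIndependent.iff_fractionRing R K]
        intro hli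
        have := hli.fintype_card_le_finrank
        simp at this
      rw [Fintype.linearIndependent_iff] at hdep hs
      push Not at hdep
      obtain ⟨r, hr, i0, hi0⟩ := hdep
      have hall : ∀ N : ℕ, ∃ c : Fin (Module.finrank K L + 1) → R, ∀ i, r i = x ^ N * c i := by
        intro N
        induction N with
        | zero => exact ⟨r, by simp⟩
        | succ N ih =>
          obtain ⟨c, hc⟩ := ih
          have h1 : ∑ i, c i • (t i : L) = 0 := by
            have : algebraMap R L (x ^ N) * ∑ i, c i • (t i : L) = 0 := by
              rw [← hr, Finset.mul_sum]
              refine Finset.sum_congr rfl fun i _ => ?_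
              rw [hc i, Algebra.smul_def, Algebra.smul_def, map_mul, mul_assoc]
            refine (mul_eq_zero.mp this).resolve_left ?_
            rw [map_pow]
            refine pow_ne_zero _ ?_
            rw [← hy]; exact pow_ne_zero _ hy0
          have h2 : ∑ i, algebraMap R S (c i) * t i = 0 := by
            apply Subtype.ext
            rw [AddSubmonoidClass.coe_finsetSum]
            refine Eq.trans (Finset.sum_congr rfl fun i _ => ?_) h1
            rw [Algebra.smul_def]; rfl
          have h3 := hs (fun i => π (c i)) (by
            have h4 := congrArg (Ideal.Quotient.mk Y) h2
            rw [map_sum, map_zero] at h4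
            refine Eq.trans (Finset.sum_congr rfl fun i _ => ?_) h4
            rw [Algebra.smul_def, map_mul, ht i]
            congr 1
            exact hj (c i))
          have h5 : ∀ i, ∃ d, c i = x * d := by
            intro i
            have := h3 i
            rwa [← RingHom.mem_ker, hker, Ideal.mem_span_singleton] at this
          choose d hd using h5
          exact ⟨d, fun i => by rw [hc i, hd i, pow_succ, mul_assoc]⟩
      apply hi0
      refine IsHausdorff.haus (I := Ideal.span {x}) inferInstance (r i0) fun N => ?_
      rw [SModEq.zero, Ideal.span_singleton_pow, smul_eq_mul, Ideal.mul_top,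
        Ideal.mem_span_singleton]
      obtain ⟨c, hc⟩ := hall N
      exact ⟨c i0, hc i0⟩
  -- generators
  obtain ⟨G, hG⟩ := hTfin.fg_top
  have hstep : ∃ N0 : Submodule R S, N0.FG ∧ ∀ z : S, ∃ a ∈ N0, ∃ w, z - a = yS * w := by
    choose lift hlift using fun s : T => Ideal.Quotient.mk_surjective s
    refine ⟨Submodule.span R (lift '' G), Submodule.fg_span (G.finite_toSet.image _), ?_⟩
    have hT : ∀ s : T, ∃ a ∈ Submodule.span R (lift '' (G : Set T)), Ideal.Quotient.mk Y a = s := by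
      intro s
      have hs : s ∈ Submodule.span R' (G : Set T) := by rw [hG]; trivial
      induction hs using Submodule.span_induction with
      | mem s hs => exact ⟨lift s, Submodule.subset_span ⟨s, hs, rfl⟩, hlift s⟩
      | zero => exact ⟨0, zero_mem _, map_zero _⟩
      | add a b _ _ ha hb =>
        obtain ⟨a', h1, h2⟩ := ha
        obtain ⟨b', h3, h4⟩ := hb
        exact ⟨a' + b', add_mem h1 h3, by rw [map_add, h2, h4]⟩
      | smul c a _ ha =>
        obtain ⟨a', h1, h2⟩ := ha
        obtain ⟨r, rfl⟩ := hπ c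
        refine ⟨r • a', Submodule.smul_mem _ _ h1, ?_⟩
        rw [Algebra.smul_def, Algebra.smul_def, map_mul, h2]
        congr 1
        exact (hj r).symm
    intro z
    obtain ⟨a, ha, haz⟩ := hT (Ideal.Quotient.mk Y z)
    refine ⟨a, ha, hdiv _ ?_⟩
    have : z - a ∈ Y := by
      rw [← Ideal.Quotient.eq, haz]
    exact this
  obtain ⟨N0, hN0, hN0s⟩ := hstep
  have hiter : ∀ k : ℕ, ∃ N : Submodule R S, N.FG ∧ ∀ z : S, ∃ a ∈ N, ∃ w, z - a = yS ^ k * w := by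
    intro k
    induction k with
    | zero => exact ⟨⊥, Submodule.fg_bot, fun z => ⟨0, zero_mem _, z, by simp⟩⟩
    | succ k ih =>
      obtain ⟨N, hN, hNs⟩ := ih
      refine ⟨N0 ⊔ N.map (LinearMap.mulLeft R yS), hN0.sup (hN.map _), fun z => ?_⟩
      obtain ⟨a, ha, w, hw⟩ := hN0s z
      obtain ⟨b, hb, u, hu⟩ := hNs w
      refine ⟨a + yS * b, add_mem (Submodule.mem_sup_left ha)
        (Submodule.mem_sup_right ⟨b, hb, rfl⟩), u, ?_⟩
      rw [← sub_sub, hw, ← mul_sub, hu, pow_succ']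
      ring
  obtain ⟨N, hN, hNs⟩ := hiter q
  have hyq : yS ^ q = algebraMap R S x := Subtype.ext hy
  have hH : IsHausdorff (Ideal.span {x}) S := by
    refine ⟨fun z hz => ?_⟩
    apply hφ0'
    refine IsHausdorff.haus (I := Ideal.span {x}) inferInstance (φ z) fun n => ?_
    have h1 := hz n
    rw [SModEq.zero, Ideal.span_singleton_pow] at h1 ⊢
    rw [Submodule.ideal_span_singleton_smul, Submodule.mem_smul_pointwise_iff_exists] at h1
    obtain ⟨w, -, rfl⟩ := h1
    rw [smul_eq_mul, Ideal.mul_top, Ideal.mem_span_singleton, Algebra.smul_def, map_mul, hφalg]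
    exact Dvd.dvd.mul_right (dvd_pow_self _ hq.ne') _
  refine finite_of_complete (Ideal.span {x}) N hN fun z => ?_
  obtain ⟨a, ha, w, hw⟩ := hNs z
  refine ⟨a, ha, ?_⟩
  rw [hw, hyq, ← Algebra.smul_def]
  exact Submodule.smul_mem_smul (Ideal.mem_span_singleton_self x) trivial

end

section

theorem tateB (p : ℕ) [Fact p.Prime] {R R' : Type} [CommRing R] [IsDomain R] [IsNoetherianRing R]
    [IsIntegrallyClosed R] [CharP R p] [CommRing R'] [IsDomain R'] [IsNoetherianRing R']
    (π : R →+* R') (hπ : Function.Surjective π) (x : R) (hx0 : x ≠ 0)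
    (hker : RingHom.ker π = Ideal.span {x}) [IsAdicComplete (Ideal.span {x}) R]
    (hP : PI2 p R') : PI2 p R := by
  intro K L _ _ _ _ _ _ _ _ e he
  have hp : p.Prime := Fact.out
  have hq : 0 < p ^ e := pow_pos hp.pos _
  obtain ⟨y, hy⟩ := IsAlgClosed.exists_pow_nat_eq (algebraMap R (AlgebraicClosure L) x) hq
  let L' := IntermediateField.adjoin L {y}
  have hinjRL : Function.Injective (algebraMap R L) := by
    rw [IsScalarTower.algebraMap_eq R K L]
    exact (algebraMap K L).injective.comp (IsFractionRing.injective R K)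
  have hcL : CharP L p := charP_of_injective_algebraMap hinjRL p
  have hcA : CharP (AlgebraicClosure L) p :=
    charP_of_injective_algebraMap (algebraMap L (AlgebraicClosure L)).injective p
  have hfd1 : FiniteDimensional L L' :=
    IntermediateField.adjoin.finiteDimensional (Algebra.IsIntegral.isIntegral y)
  have hfd : FiniteDimensional K L' := FiniteDimensional.trans K L L'
  have he' : ∀ z : AlgebraicClosure L, z ∈ L' →
      z ^ (p ^ e) ∈ (algebraMap K (AlgebraicClosure L)).fieldRange := by
    intro z hz
    induction hz using IntermediateField.adjoin_induction with
    | mem z hz =>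
      rw [Set.mem_singleton_iff.mp hz, hy, IsScalarTower.algebraMap_apply R K (AlgebraicClosure L)]
      exact ⟨_, rfl⟩
    | algebraMap l =>
      obtain ⟨k, hk⟩ := he l
      exact ⟨k, by rw [← map_pow, ← hk, ← IsScalarTower.algebraMap_apply]⟩
    | add a b _ _ ha hb =>
      rw [add_pow_expChar_pow _ _ p e]; exact add_mem ha hb
    | inv a _ ha => rw [inv_pow]; exact inv_mem ha
    | mul a b _ _ ha hb => rw [mul_pow]; exact mul_mem ha hb
  have : IsScalarTower R K L' := IsScalarTower.of_algebraMap_eq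
    (fun r => Subtype.ext (IsScalarTower.algebraMap_apply R K (AlgebraicClosure L) r))
  have hfin : Module.Finite R (integralClosure R L') := by
    refine tateA p π hπ x hx0 hker hP K L' e (fun z => ?_)
      ⟨y, IntermediateField.mem_adjoin_simple_self L y⟩ (Subtype.ext hy)
    obtain ⟨k, hk⟩ := he' z z.2
    exact ⟨k, Subtype.ext hk⟩
  let g : integralClosure R L →ₐ[R] integralClosure R L' :=
    ((IsScalarTower.toAlgHom R L L').comp (integralClosure R L).val).codRestrict _
      (fun s => IsIntegral.map (IsScalarTower.toAlgHom R L L') s.2)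
  refine Module.Finite.of_injective g.toLinearMap ?_
  intro a b hab
  exact Subtype.ext ((algebraMap L L').injective (congrArg Subtype.val hab))

theorem PI2_field (p : ℕ) (k : Type) [Field k] : PI2 p k := by
  intro K L _ _ _ _ _ _ _ _ e he
  have hb : Function.Bijective (algebraMap k K) := by
    refine ⟨(algebraMap k K).injective, fun z => ?_⟩
    obtain ⟨a, b, -, rfl⟩ := IsFractionRing.div_surjective (A := k) z
    exact ⟨a / b, map_div₀ _ _ _⟩
  have : Module.Finite k K :=
    Module.Finite.of_surjective (Algebra.linearMap k K) hb.2
  have : Module.Finite k L := Module.Finite.trans K L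
  exact Module.Finite.of_injective (integralClosure k L).val.toLinearMap Subtype.val_injective


theorem ps_almost {R K : Type} [CommRing R] [IsDomain R] [IsNoetherianRing R]
    [IsIntegrallyClosed R] [Field K] [Algebra R K] [IsFractionRing R K] (n : ℕ) :
    ∀ (f : PowerSeries K) (d : PowerSeries R), d ≠ 0 →
      (∀ m : ℕ, ∃ c : PowerSeries R, PowerSeries.map (algebraMap R K) d * f ^ m =
        PowerSeries.map (algebraMap R K) c) →
      PowerSeries.coeff n f ∈ Set.range (algebraMap R K) := by
  have h0 : ∀ (f : PowerSeries K) (d : PowerSeries R), d ≠ 0 →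
      (∀ m : ℕ, ∃ c : PowerSeries R, PowerSeries.map (algebraMap R K) d * f ^ m =
        PowerSeries.map (algebraMap R K) c) →
      PowerSeries.constantCoeff f ∈ Set.range (algebraMap R K) := by
    intro f d hd h
    obtain ⟨d', k, hd', hk⟩ : ∃ (d' : PowerSeries R) (k : ℕ),
        PowerSeries.constantCoeff d' ≠ 0 ∧ d = PowerSeries.X ^ k * d' := by
      refine ⟨d.divXPowOrder, d.order.toNat, ?_, (PowerSeries.X_pow_order_mul_divXPowOrder).symm⟩
      rw [PowerSeries.constantCoeff_divXPowOrder]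
      exact PowerSeries.coeff_order hd
    have hai : IsAlmostIntegral R (PowerSeries.constantCoeff f) := by
      refine ⟨PowerSeries.constantCoeff d', mem_nonZeroDivisors_of_ne_zero hd', fun m => ?_⟩
      obtain ⟨c, hc⟩ := h m
      refine ⟨PowerSeries.coeff k c, ?_⟩
      have hk2 : PowerSeries.map (algebraMap R K) d =
          PowerSeries.X ^ k * PowerSeries.map (algebraMap R K) d' := by
        rw [hk, map_mul, map_pow, PowerSeries.map_X]
      rw [hk2, mul_assoc] at hc
      have := congrArg (PowerSeries.coeff k) hc
      rw [PowerSeries.coeff_map] at this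
      rw [← this]
      have h2 := PowerSeries.coeff_X_pow_mul (PowerSeries.map (algebraMap R K) d' * f ^ m) k 0
      rw [zero_add] at h2
      rw [h2, PowerSeries.coeff_zero_eq_constantCoeff, map_mul, map_pow, Algebra.smul_def]
      congr 1
    exact IsIntegrallyClosed.isIntegral_iff.mp hai.isIntegral
  induction n with
  | zero =>
    intro f d hd h
    rw [PowerSeries.coeff_zero_eq_constantCoeff]
    exact h0 f d hd h
  | succ n ih =>
    intro f d hd h
    obtain ⟨r, hr⟩ := h0 f d hd h
    obtain ⟨f1, hf1⟩ : PowerSeries.X ∣ f - PowerSeries.C (algebraMap R K r) := by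
      rw [PowerSeries.X_dvd_iff, map_sub, hr]; simp
    have hfe : f = PowerSeries.X * f1 + PowerSeries.C (algebraMap R K r) := by
      rw [← hf1]; ring
    have h1 : PowerSeries.coeff (n + 1) f = PowerSeries.coeff n f1 := by
      rw [hfe, map_add, PowerSeries.coeff_succ_X_mul, PowerSeries.coeff_succ_C, add_zero]
    rw [h1]
    refine ih f1 d hd fun m => ?_
    have h2 : ∃ c : PowerSeries R, PowerSeries.map (algebraMap R K) d *
        (f + PowerSeries.map (algebraMap R K) (PowerSeries.C (-r))) ^ m =
        PowerSeries.map (algebraMap R K) c := by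
      choose c hc using h
      refine ⟨∑ i ∈ Finset.range (m + 1), c i * (PowerSeries.C (-r)) ^ (m - i) * (m.choose i : PowerSeries R), ?_⟩
      rw [add_pow, Finset.mul_sum, map_sum]
      refine Finset.sum_congr rfl fun i _ => ?_
      rw [map_mul, map_mul, ← hc i, map_pow, map_natCast]
      ring
    obtain ⟨c, hc⟩ := h2
    have h3 : f + PowerSeries.map (algebraMap R K) (PowerSeries.C (-r)) = PowerSeries.X * f1 := by
      rw [← hf1, PowerSeries.map_C, map_neg, map_neg]; ring
    rw [h3, mul_pow, mul_left_comm] at hc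
    have h4 : ∀ j, algebraMap R K (PowerSeries.coeff (j + m) c) =
        PowerSeries.coeff j (PowerSeries.map (algebraMap R K) d * f1 ^ m) := by
      intro j
      rw [← PowerSeries.coeff_map, ← hc, PowerSeries.coeff_X_pow_mul]
    refine ⟨PowerSeries.mk fun j => PowerSeries.coeff (j + m) c, ?_⟩
    ext j
    rw [PowerSeries.coeff_map, PowerSeries.coeff_mk, h4]

theorem ps_normal {R : Type} [CommRing R] [IsDomain R] [IsNoetherianRing R]
    [IsIntegrallyClosed R] : IsIntegrallyClosed (PowerSeries R) := by
  rw [isIntegrallyClosed_iff (FractionRing (PowerSeries R))]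
  intro s hs
  let K := FractionRing R
  obtain ⟨a, b, hb, rfl⟩ := IsFractionRing.div_surjective (A := PowerSeries R) s
  have hb0 : b ≠ 0 := nonZeroDivisors.ne_zero hb
  let φ := PowerSeries.map (algebraMap R K)
  have hφ : Function.Injective φ := by
    intro u v huv
    ext n
    have := congrArg (PowerSeries.coeff n) huv
    rw [PowerSeries.coeff_map, PowerSeries.coeff_map] at this
    exact IsFractionRing.injective R K this
  have hinj := IsFractionRing.injective (PowerSeries R) (FractionRing (PowerSeries R))
  -- quotient in K[[X]]
  let F := FractionRing (PowerSeries K)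
  have hinjF := IsFractionRing.injective (PowerSeries K) F
  let ψ : FractionRing (PowerSeries R) →+* F :=
    IsFractionRing.lift (K := FractionRing (PowerSeries R)) (L := F)
      (g := (algebraMap (PowerSeries K) F).comp φ) (hinjF.comp hφ)
  have hψ : ∀ u, ψ (algebraMap _ _ u) = algebraMap _ F (φ u) := fun u =>
    IsFractionRing.lift_algebraMap (A := PowerSeries R) _ u
  have hsF : IsIntegral (PowerSeries K) (ψ (algebraMap _ _ a / algebraMap _ _ b)) := by
    obtain ⟨P, hPm, hP⟩ := hs
    refine ⟨P.map φ, hPm.map _, ?_⟩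
    rw [Polynomial.eval₂_map]
    have := congrArg ψ hP
    rw [map_zero, Polynomial.hom_eval₂] at this
    have hcomp : ψ.comp (algebraMap _ _) = (algebraMap (PowerSeries K) F).comp φ :=
      RingHom.ext hψ
    rw [hcomp] at this
    exact this
  obtain ⟨f, hf⟩ := IsIntegrallyClosed.isIntegral_iff.mp hsF
  have hbF : algebraMap _ F (φ b) ≠ 0 := by
    intro h
    exact hb0 (hφ (by rw [map_zero]; exact hinjF (by rw [h, map_zero])))
  have hab : φ a = φ b * f := by
    apply hinjF
    rw [map_mul, hf, map_div₀, hψ, hψ]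
    exact (mul_div_cancel₀ _ hbF).symm
  obtain ⟨d, hd, hdn⟩ := hs.isAlmostIntegral
  have hfm : ∀ m : ℕ, ∃ c : PowerSeries R, φ d * f ^ m = φ c := by
    intro m
    obtain ⟨c, hc⟩ := hdn m
    refine ⟨c, ?_⟩
    have h1 : c * b ^ m = d * a ^ m := by
      apply hinj
      have hb1 : algebraMap _ (FractionRing (PowerSeries R)) b ≠ 0 := by
        intro h; exact hb0 (hinj (by rw [h, map_zero]))
      rw [map_mul, map_mul, hc, Algebra.smul_def, div_pow, map_pow, map_pow]
      field_simp
    have h2 := congrArg φ h1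
    rw [map_mul, map_mul, map_pow, map_pow, hab, mul_pow] at h2
    have hb2 : φ b ^ m ≠ 0 := by
      refine pow_ne_zero _ ?_
      intro h; exact hb0 (hφ (by rw [h, map_zero]))
    apply mul_right_cancel₀ hb2
    rw [h2]; ring
  have hco := fun n => ps_almost n f d (nonZeroDivisors.ne_zero hd) hfm
  choose c hc using hco
  refine ⟨PowerSeries.mk c, ?_⟩
  have h5 : φ (PowerSeries.mk c) = f := by
    ext n
    rw [PowerSeries.coeff_map, PowerSeries.coeff_mk, hc]
  have h6 : a = b * PowerSeries.mk c := hφ (by rw [hab, map_mul, h5])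
  have hb1 : algebraMap _ (FractionRing (PowerSeries R)) b ≠ 0 := by
    intro h; exact hb0 (hinj (by rw [h, map_zero]))
  rw [h6, map_mul]
  field_simp

end

section

instance mv_domain (C : Type) [CommRing C] [IsDomain C] (n : ℕ) :
    IsDomain (MvPowerSeries (Fin n) C) := by
  have : NoZeroDivisors (MvPowerSeries (Fin n) C) := inferInstance
  exact NoZeroDivisors.to_isDomain _

theorem mv_normal (C : Type) [CommRing C] [IsDomain C] [IsNoetherianRing C] [IsIntegrallyClosed C]
    (n : ℕ) : IsIntegrallyClosed (MvPowerSeries (Fin n) C) := by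
  induction n with
  | zero =>
    exact IsIntegrallyClosed.of_equiv (MvPowerSeries.isEmptyEquiv (σ := Fin 0) (R := C)).symm.toRingEquiv
  | succ n ih =>
    have := ps_normal (R := MvPowerSeries (Fin n) C)
    exact IsIntegrallyClosed.of_equiv (MvPowerSeries.finSuccEquiv C n).symm.toRingEquiv

theorem PI2_isField (p : ℕ) (k : Type) [CommRing k] (hk : IsField k) : PI2 p k := by
  let _ := hk.toField
  exact PI2_field p k

theorem mv_PI2 (p : ℕ) [Fact p.Prime] (C : Type) [Field C] [CharP C p]
    (n : ℕ) : PI2 p (MvPowerSeries (Fin n) C) := by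
  induction n with
  | zero =>
    exact PI2_isField p _ ((MvPowerSeries.isEmptyEquiv (σ := Fin 0) (R := C)).toMulEquiv.isField
      (Field.toIsField C))
  | succ n ih =>
    let R' := MvPowerSeries (Fin n) C
    let R := MvPowerSeries (Fin (n + 1)) C
    have hN := mv_normal C (n + 1)
    let f : R ≃+* PowerSeries R' := (MvPowerSeries.finSuccEquiv C n).toRingEquiv
    have hch : CharP R p :=
      charP_of_injective_ringHom (f := (MvPowerSeries.C : C →+* R)) (RingHom.injective _) p
    let x : R := f.symm PowerSeries.X
    let π : R →+* R' := (PowerSeries.constantCoeff (R := R')).comp f.toRingHom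
    have hmap : (Ideal.span {x}).map f = Ideal.span {PowerSeries.X} := by
      rw [Ideal.map_span]; simp [x]
    have hc : IsAdicComplete (Ideal.span {x}) R := by
      rw [← IsAdicComplete.congr_ringEquiv (Ideal.span {x}) f, hmap]
      infer_instance
    refine tateB p π ?_ x ?_ ?_ ih
    · intro a
      exact ⟨f.symm (PowerSeries.C a), by simp [π]⟩
    · intro h
      have := congrArg f h
      simp [x] at this
    · ext a
      rw [RingHom.mem_ker, Ideal.mem_span_singleton, ← map_dvd_iff f]
      simp [π, x, PowerSeries.X_dvd_iff]

/-- Finiteness of integral closure in all finite extensions of the fraction field. -/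
def N2 (R : Type) [CommRing R] : Prop :=
  ∀ (K L : Type) [Field K] [Field L] [Algebra R K] [IsFractionRing R K] [Algebra R L]
    [Algebra K L] [IsScalarTower R K L] [FiniteDimensional K L],
    Module.Finite R (integralClosure R L)

theorem N2_of_charZero (R : Type) [CommRing R] [IsDomain R] [CharZero R] [IsNoetherianRing R]
    [IsIntegrallyClosed R] : N2 R := by
  intro K L _ _ _ _ _ _ _ _
  have : CharZero K := charZero_of_injective_algebraMap (IsFractionRing.injective R K)
  exact IsIntegralClosure.finite R K L (integralClosure R L)


end

section

theorem N2_aux (p : ℕ) (R : Type) [CommRing R] [IsDomain R] [IsNoetherianRing R]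
    (hP : PI2 p R) (K K' M L : Type) [Field K] [Field K'] [Field M] [Field L]
    [Algebra R K] [IsFractionRing R K] [Algebra R K'] [Algebra K K'] [IsScalarTower R K K']
    [FiniteDimensional K K'] (e : ℕ) (he : ∀ z : K', z ^ (p ^ e) ∈ Set.range (algebraMap K K'))
    [Algebra K' M] [FiniteDimensional K' M] [Algebra.IsSeparable K' M] [Algebra R M]
    [IsScalarTower R K' M] [Algebra R L] (g : L →ₐ[R] M) :
    Module.Finite R (integralClosure R L) := by
  have hfin := hP K K' e he
  let S := integralClosure R K'
  have h1 : IsFractionRing S K' := integralClosure.isFractionRing_of_finite_extension K K'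
  have h2 : IsIntegrallyClosed S := integralClosure.isIntegrallyClosedOfFiniteExtension K
  have h3 : IsNoetherianRing S := isNoetherian_of_isNoetherianRing_of_finite R S |> fun _ =>
    isNoetherian_of_tower R inferInstance
  have : IsScalarTower S K' M := inferInstance
  have : IsScalarTower R S M := IsScalarTower.of_algebraMap_eq fun r => by
    rw [IsScalarTower.algebraMap_apply R K' M]; rfl
  have h4 : Module.Finite S (integralClosure S M) := IsIntegralClosure.finite S K' M _
  let T := integralClosure S M
  have : IsScalarTower R S T := IsScalarTower.of_algebraMap_eq fun r => Subtype.ext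
    (IsScalarTower.algebraMap_apply R S M r)
  have h5 : Module.Finite R T := Module.Finite.trans S T
  let G : integralClosure R L →ₗ[R] T :=
    { toFun := fun z => ⟨g z, (IsIntegral.map g z.2).tower_top⟩
      map_add' := fun a b => Subtype.ext (map_add g a.1 b.1)
      map_smul' := fun r a => Subtype.ext (by
        change g (r • a.1) = r • g a.1
        exact map_smul g r a.1) }
  exact Module.Finite.of_injective G fun a b hab =>
    Subtype.ext (g.toRingHom.injective (congrArg Subtype.val hab))

theorem N2_of_charP (p : ℕ) [Fact p.Prime] (R : Type) [CommRing R] [IsDomain R] [CharP R p]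
    [IsNoetherianRing R] (hP : PI2 p R) : N2 R := by
  intro K L _ _ _ _ _ _ _ _
  have hcK : CharP K p := charP_of_injective_algebraMap (IsFractionRing.injective R K) p
  let Ω := AlgebraicClosure L
  let P := perfectClosure K Ω
  have hcO : CharP Ω p := charP_of_injective_algebraMap (algebraMap K Ω).injective p
  let n := Module.finrank K L
  let b := Module.finBasis K L
  let T : Set Ω := ⋃ i, (fun c : P => (c : Ω)) ''
    ((minpoly P (algebraMap L Ω (b i))).coeffs : Set P)
  have hTfin : T.Finite := Set.finite_iUnion fun i => (Finset.finite_toSet _).image _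
  let K' := IntermediateField.adjoin K T
  have hTP : K' ≤ P := by
    rw [IntermediateField.adjoin_le_iff]
    intro t ht
    obtain ⟨i, c, _, rfl⟩ := Set.mem_iUnion.mp ht
    exact c.2
  have halg : Algebra.IsAlgebraic K Ω := Algebra.IsAlgebraic.trans K L Ω
  have hfd : FiniteDimensional K K' := by
    have := hTfin.to_subtype
    exact IntermediateField.finiteDimensional_adjoin fun t _ => Algebra.IsIntegral.isIntegral t
  have hpi : IsPurelyInseparable K K' := le_perfectClosure_iff K Ω K' |>.mp hTP
  obtain ⟨e, he⟩ := (IsPurelyInseparable.hasExponent_iff' K K' p).mp inferInstance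
  have hsep : ∀ i, IsSeparable K' (algebraMap L Ω (b i)) := by
    intro i
    let f := minpoly P (algebraMap L Ω (b i))
    have hf : f.Separable := Algebra.IsSeparable.isSeparable P _
    -- f comes from K'
    let fΩ : Polynomial Ω := f.map (algebraMap P Ω)
    have hlift : fΩ ∈ Polynomial.lifts (algebraMap K' Ω) := by
      rw [Polynomial.lifts_iff_coeff_lifts]
      intro m
      rw [Polynomial.coeff_map]
      by_cases h0 : f.coeff m = 0
      · exact ⟨0, by rw [h0, map_zero, map_zero]⟩
      · refine ⟨⟨algebraMap P Ω (f.coeff m), IntermediateField.subset_adjoin K T ?_⟩, rfl⟩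
        exact Set.mem_iUnion.mpr ⟨i, f.coeff m, Polynomial.coeff_mem_coeffs h0, rfl⟩
    obtain ⟨g, hg⟩ := (Polynomial.mem_lifts _).mp hlift
    have hgs : g.Separable := by
      rw [← Polynomial.separable_map (algebraMap K' Ω), hg]
      exact hf.map
    refine hgs.of_dvd (minpoly.dvd K' _ ?_)
    rw [← Polynomial.eval_map_algebraMap, hg, Polynomial.eval_map_algebraMap]
    exact minpoly.aeval P _
  let M := IntermediateField.adjoin K' (Set.range fun i => algebraMap L Ω (b i))
  have hMs : Algebra.IsSeparable K' M := by
    rw [IntermediateField.isSeparable_adjoin_iff_isSeparable]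
    rintro _ ⟨i, rfl⟩
    exact hsep i
  have hMf : FiniteDimensional K' M := by
    have := (Set.finite_range fun i => algebraMap L Ω (b i)).to_subtype
    exact IntermediateField.finiteDimensional_adjoin fun t _ => Algebra.IsIntegral.isIntegral t
  have hLM : ∀ l : L, algebraMap L Ω l ∈ M := by
    intro l
    rw [← b.sum_repr l, map_sum]
    refine sum_mem fun i _ => ?_
    rw [Algebra.smul_def, map_mul]
    refine mul_mem ?_ (IntermediateField.subset_adjoin K' _ ⟨i, rfl⟩)
    rw [← IsScalarTower.algebraMap_apply K L Ω, IsScalarTower.algebraMap_apply K K' Ω]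
    exact M.algebraMap_mem _
  let _ : Algebra R M := ((algebraMap K' M).comp (algebraMap R K')).toAlgebra
  have : IsScalarTower R K' M := IsScalarTower.of_algebraMap_eq fun _ => rfl
  have : IsScalarTower R K K' := IsScalarTower.of_algebraMap_eq fun r => Subtype.ext
    (IsScalarTower.algebraMap_apply R K Ω r)
  let g : L →ₐ[R] M :=
    { (algebraMap L Ω).codRestrict M.toSubring hLM with
      commutes' := fun r => Subtype.ext (IsScalarTower.algebraMap_apply R L Ω r).symm }
  refine N2_aux p R hP K K' M L e (fun z => ?_) g
  obtain ⟨k, hk⟩ := he z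
  exact ⟨k, hk⟩

end

section

theorem coeff_field_zorn {D : Type} [CommRing D] (p : ℕ) [hpf : Fact p.Prime] [CharP D p] (M : Ideal D)
    [hMax : M.IsMaximal] (hM : ∀ x ∈ M, x ^ p = 0) :
    ∃ F : Subring D, (∀ x ∈ F, x ∈ M → x = 0) ∧ ∀ a, ∃ f ∈ F, a - f ∈ M := by
  have hp : p.Prime := hpf.out
  let 𝓢 : Set (Subring D) := {F | (∀ x, x ^ p ∈ F) ∧ ∀ x ∈ F, x ∈ M → x = 0}
  have h0 : (frobenius D p).range ∈ 𝓢 := by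
    refine ⟨fun x => ⟨x, rfl⟩, ?_⟩
    rintro _ ⟨x, rfl⟩ hx
    exact hM x (hMax.isPrime.mem_of_pow_mem p hx)
  obtain ⟨F, -, hF⟩ := zorn_le_nonempty₀ 𝓢 (by
    intro c hc hch y hy
    refine ⟨sSup c, ⟨fun x => ?_, fun x hx hxM => ?_⟩, fun z hz => le_sSup hz⟩
    · exact (le_sSup hy) ((hc hy).1 x)
    · rw [Subring.mem_sSup_of_directedOn ⟨y, hy⟩ hch.directedOn] at hx
      obtain ⟨s, hs, hxs⟩ := hx
      exact (hc hs).2 x hxs hxM) _ h0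
  obtain ⟨hF1, hF2⟩ := hF.prop
  refine ⟨F, hF2, ?_⟩
  by_contra hcon
  push Not at hcon
  obtain ⟨a, ha⟩ := hcon
  have hnt : Nontrivial D := CharP.nontrivial_of_char_ne_one (v := p) hp.ne_one
  have hfield : IsField F := by
    refine ⟨⟨0, 1, zero_ne_one⟩, mul_comm, ?_⟩
    intro x hx
    have hxM : (x : D) ∉ M := fun h => hx (Subtype.ext (hF2 x x.2 h))
    obtain ⟨b, hb⟩ := hMax.exists_inv hxM
    obtain ⟨i, hi, hbi⟩ := hb
    have h1 : (b * x + i) ^ p = 1 := by rw [hbi, one_pow]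
    rw [add_pow_char, hM i hi, add_zero, mul_pow] at h1
    refine ⟨⟨b ^ p, hF1 b⟩ * x ^ (p - 1), Subtype.ext ?_⟩
    change (x : D) * (b ^ p * (x : D) ^ (p - 1)) = 1
    rw [← h1, ← Nat.succ_pred_eq_of_pos hp.pos]
    simp only [Nat.succ_eq_add_one, Nat.pred_eq_sub_one, Nat.add_sub_cancel]
    ring
  let _ : Field F := hfield.toField
  let _ : Field (D ⧸ M) := Ideal.Quotient.field M
  let j : F →+* D ⧸ M := (Ideal.Quotient.mk M).comp F.subtype
  let _ : Algebra F (D ⧸ M) := j.toAlgebra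
  let c : F := ⟨a ^ p, hF1 a⟩
  have hirr : Irreducible (Polynomial.X ^ p - Polynomial.C c) := by
    refine X_pow_sub_C_irreducible_of_prime hp fun b hb => ?_
    have h1 : (b : D) ^ p = a ^ p := congrArg Subtype.val hb
    refine ha b b.2 (hMax.isPrime.mem_of_pow_mem p ?_)
    rw [sub_pow_char, h1, sub_self]
    exact M.zero_mem
  let E : Polynomial F →+* D := Polynomial.eval₂RingHom F.subtype a
  have hEmem : E.range ∈ 𝓢 := by
    refine ⟨fun x => ⟨Polynomial.C ⟨x ^ p, hF1 x⟩, by simp [E]⟩, ?_⟩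
    rintro _ ⟨g, rfl⟩ hg
    have hroot : Polynomial.aeval (Ideal.Quotient.mk M a) g = 0 := by
      rw [← Ideal.Quotient.eq_zero_iff_mem] at hg
      rw [← hg]
      simp only [E, Polynomial.coe_eval₂RingHom, Polynomial.hom_eval₂, Polynomial.aeval_def]
      rfl
    have hroot2 : Polynomial.aeval (Ideal.Quotient.mk M a) (Polynomial.X ^ p - Polynomial.C c) = 0 := by
      rw [map_sub, map_pow, Polynomial.aeval_X, Polynomial.aeval_C, ← map_pow, sub_eq_zero]
      rfl
    have hmin := minpoly.eq_of_irreducible_of_monic hirr hroot2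
      (Polynomial.monic_X_pow_sub_C c hp.ne_zero)
    obtain ⟨h, hh⟩ : (Polynomial.X ^ p - Polynomial.C c) ∣ g := by
      rw [hmin]; exact minpoly.dvd _ _ hroot
    rw [hh, map_mul]
    have : E (Polynomial.X ^ p - Polynomial.C c) = 0 := by
      simp [E, c]
    rw [this, zero_mul]
  have hle : F ≤ E.range := fun x hx => ⟨Polynomial.C ⟨x, hx⟩, by simp [E]⟩
  have := hF.le_of_ge hEmem hle
  exact ha a (this ⟨Polynomial.X, by simp [E]⟩) (by simp)

/-- One step of the construction of a coefficient ring. -/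
theorem coeff_step {A : Type} [CommRing A] [IsLocalRing A] (p : ℕ) [hpf : Fact p.Prime]
    (hpm : (p : A) ∈ IsLocalRing.maximalIdeal A) (n : ℕ) (hn : 0 < n) (D : Subring A)
    (h1 : ∀ x ∈ IsLocalRing.maximalIdeal A ^ n, x ∈ D)
    (h2 : ∀ a : A, ∃ d ∈ D, a - d ∈ IsLocalRing.maximalIdeal A)
    (h3 : ∀ d ∈ D, d ∈ IsLocalRing.maximalIdeal A →
      ∃ u ∈ D, d - p * u ∈ IsLocalRing.maximalIdeal A ^ n) :
    ∃ D' : Subring A, D' ≤ D ∧ (∀ x ∈ IsLocalRing.maximalIdeal A ^ (n + 1), x ∈ D') ∧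
      (∀ d ∈ D, ∃ d' ∈ D', d - d' ∈ IsLocalRing.maximalIdeal A ^ n) ∧
      (∀ d ∈ D', d ∈ IsLocalRing.maximalIdeal A →
        ∃ u ∈ D', d - p * u ∈ IsLocalRing.maximalIdeal A ^ (n + 1)) := by
  set m := IsLocalRing.maximalIdeal A with hm
  have hmle : m ^ (n + 1) ≤ m ^ n := Ideal.pow_le_pow_right (Nat.le_succ n)
  let J : Ideal D :=
    { carrier := {d | ∃ u ∈ D, (d : A) - p * u ∈ m ^ (n + 1)}
      add_mem' := by
        rintro a b ⟨u, hu, hu'⟩ ⟨v, hv, hv'⟩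
        refine ⟨u + v, add_mem hu hv, ?_⟩
        have := add_mem hu' hv'
        convert this using 1
        push_cast; ring
      zero_mem' := ⟨0, zero_mem _, by simp⟩
      smul_mem' := by
        rintro c a ⟨u, hu, hu'⟩
        refine ⟨c * u, mul_mem c.2 hu, ?_⟩
        have := Ideal.mul_mem_left (m ^ (n + 1)) (c : A) hu'
        convert this using 1
        simp only [smul_eq_mul, Subring.coe_mul]; ring }
  let P : Ideal D := m.comap D.subtype
  have hJP : J ≤ P := by
    rintro d ⟨u, hu, hu'⟩
    have h5 : (d : A) - p * u ∈ m := Ideal.pow_le_self (Nat.succ_ne_zero n) hu'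
    have h6 : (p : A) * u ∈ m := Ideal.mul_mem_right _ _ hpm
    have := add_mem h5 h6
    rw [sub_add_cancel] at this
    exact this
  have hPmax : P.IsMaximal := by
    let φ : D →+* A ⧸ m := (Ideal.Quotient.mk m).comp D.subtype
    have hs : Function.Surjective φ := by
      intro z
      obtain ⟨a, rfl⟩ := Ideal.Quotient.mk_surjective z
      obtain ⟨d, hd, hda⟩ := h2 a
      refine ⟨⟨d, hd⟩, ?_⟩
      exact ((Ideal.Quotient.eq).mpr hda).symm
    have hk : RingHom.ker φ = P := by
      ext d
      rw [RingHom.mem_ker]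
      exact Ideal.Quotient.eq_zero_iff_mem
    rw [← hk]
    let _ : Field (A ⧸ m) := Ideal.Quotient.field m
    exact RingHom.ker_isMaximal_of_surjective φ hs
  let Dq := D ⧸ J
  let q := Ideal.Quotient.mk J
  let M : Ideal Dq := P.map q
  have hJ : RingHom.ker q = J := Ideal.mk_ker
  have hqs : Function.Surjective q := Ideal.Quotient.mk_surjective
  have hMmax : M.IsMaximal := Ideal.IsMaximal.map_of_surjective_of_ker_le hqs (by rw [hJ]; exact hJP)
  have hMmem : ∀ d : D, q d ∈ M ↔ (d : A) ∈ m := by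
    intro d
    rw [← Ideal.mem_comap, Ideal.comap_map_of_surjective' q hqs, hJ, sup_eq_left.mpr hJP]
    rfl
  have hnt : Nontrivial Dq := by
    refine Ideal.Quotient.nontrivial_iff.mpr fun h => hPmax.ne_top (top_le_iff.mp (h ▸ hJP))
  have hch : CharP Dq p := by
    rw [CharP.charP_iff_prime_eq_zero hpf.out]
    have : (p : Dq) = q (p : D) := by simp
    rw [this, Ideal.Quotient.eq_zero_iff_mem]
    exact ⟨1, one_mem _, by simp⟩
  have hpow : ∀ x ∈ M, x ^ p = 0 := by
    intro x hx
    obtain ⟨d, rfl⟩ := hqs x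
    have hd := (hMmem d).mp hx
    obtain ⟨u, hu, hdu⟩ := h3 d d.2 hd
    let t : D := ⟨(d : A) - p * u, h1 _ hdu⟩
    have ht : q d = q t := by
      refine (Ideal.Quotient.eq).mpr ⟨u, hu, ?_⟩
      simp [t]
    rw [ht, ← map_pow, Ideal.Quotient.eq_zero_iff_mem]
    refine ⟨0, zero_mem _, ?_⟩
    simp only [mul_zero, sub_zero, SubmonoidClass.coe_pow]
    have h7 := Ideal.pow_mem_pow hdu p
    rw [← pow_mul] at h7
    refine Ideal.pow_le_pow_right ?_ h7
    have := hpf.out.two_le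
    nlinarith
  obtain ⟨F, hF1, hF2⟩ := coeff_field_zorn p M hpow
  let D' : Subring A := (F.comap q).map D.subtype
  have hD' : ∀ a : A, a ∈ D' ↔ ∃ h : a ∈ D, q ⟨a, h⟩ ∈ F := by
    intro a
    constructor
    · rintro ⟨d, hd, rfl⟩
      exact ⟨d.2, hd⟩
    · rintro ⟨h, hh⟩
      exact ⟨⟨a, h⟩, hh, rfl⟩
  have hlift : ∀ d ∈ D, ∃ d' ∈ D', d - d' ∈ m ^ n := by
    intro d hd
    obtain ⟨f, hf, hdf⟩ := hF2 (q ⟨d, hd⟩)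
    obtain ⟨g, rfl⟩ := hqs f
    rw [← map_sub, hMmem] at hdf
    obtain ⟨u, hu, hu'⟩ := h3 _ (sub_mem hd g.2) hdf
    refine ⟨g + p * u, ?_, ?_⟩
    · refine (hD' _).mpr ⟨add_mem g.2 (mul_mem (natCast_mem D p) hu), ?_⟩
      have : q ⟨g + p * u, add_mem g.2 (mul_mem (natCast_mem D p) hu)⟩ = q g := by
        refine (Ideal.Quotient.eq).mpr ⟨u, hu, ?_⟩
        simp
      rw [this]; exact hf
    · convert hu' using 1
      ring
  refine ⟨D', fun a ha => ((hD' a).mp ha).1, ?_, hlift, ?_⟩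
  · intro x hx
    refine (hD' x).mpr ⟨h1 x (hmle hx), ?_⟩
    have : q ⟨x, h1 x (hmle hx)⟩ = 0 := by
      rw [Ideal.Quotient.eq_zero_iff_mem]
      exact ⟨0, zero_mem _, by simpa using hx⟩
    rw [this]; exact zero_mem _
  · intro d hd hdm
    obtain ⟨hdD, hdF⟩ := (hD' d).mp hd
    have := hF1 _ hdF ((hMmem _).mpr hdm)
    rw [Ideal.Quotient.eq_zero_iff_mem] at this
    obtain ⟨u, hu, hdu⟩ := this
    obtain ⟨u', hu', huu⟩ := hlift u hu
    refine ⟨u', hu', ?_⟩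
    have h8 : (p : A) * (u - u') ∈ m ^ (n + 1) := by
      rw [pow_succ']; exact Ideal.mul_mem_mul hpm huu
    have := add_mem hdu h8
    convert this using 1
    simp only
    ring

end

section
open IsLocalRing in
theorem exists_coeff_ring {A : Type} [CommRing A] [IsLocalRing A] (p : ℕ) [Fact p.Prime]
    [IsAdicComplete (maximalIdeal A) A] (hpm : (p : A) ∈ maximalIdeal A) :
    ∃ C : Subring A, (∀ a, ∃ c ∈ C, a - c ∈ maximalIdeal A) ∧
      (∀ a, (∀ n, ∃ c ∈ C, a - c ∈ maximalIdeal A ^ n) → a ∈ C) ∧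
      (∀ c ∈ C, c ∈ maximalIdeal A → ∀ n, ∃ u ∈ C, c - p * u ∈ maximalIdeal A ^ n) := by
  let m := maximalIdeal A
  let Good : ℕ → Subring A → Prop := fun n D =>
    (∀ x ∈ m ^ n, x ∈ D) ∧ (∀ a, ∃ d ∈ D, a - d ∈ m) ∧
      (∀ d ∈ D, d ∈ m → ∃ u ∈ D, d - p * u ∈ m ^ n)
  have step : ∀ n (D : {D : Subring A // Good (n + 1) D}),
      ∃ D' : {D : Subring A // Good (n + 1 + 1) D}, D'.1 ≤ D.1 ∧
        ∀ d ∈ D.1, ∃ d' ∈ D'.1, d - d' ∈ m ^ (n + 1) := by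
    rintro n ⟨D, h1, h2, h3⟩
    obtain ⟨D', hle, g1, g2, g3⟩ := coeff_step p hpm (n + 1) (Nat.succ_pos _) D h1 h2 h3
    refine ⟨⟨D', g1, fun a => ?_, g3⟩, hle, g2⟩
    obtain ⟨d, hd, had⟩ := h2 a
    obtain ⟨d', hd', hdd⟩ := g2 d hd
    refine ⟨d', hd', ?_⟩
    have : a - d' = (a - d) + (d - d') := by ring
    rw [this]
    exact add_mem had (Ideal.pow_le_self (Nat.succ_ne_zero n) hdd)
  choose S hS1 hS2 using step
  have hT : Good (0 + 1) (⊤ : Subring A) :=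
    ⟨fun _ _ => trivial, fun a => ⟨a, trivial, by simp⟩, fun d _ hd => ⟨0, trivial, by simpa using hd⟩⟩
  let D : ∀ n, {D : Subring A // Good (n + 1) D} := fun n => Nat.rec ⟨⊤, hT⟩ (fun n D => S n D) n
  have hDs : ∀ n, D (n + 1) = S n (D n) := fun n => rfl
  have hanti : Antitone fun n => (D n).1 := antitone_nat_of_succ_le fun n => by
    rw [hDs]; exact hS1 n _
  let C : Subring A := ⨅ n, (D n).1
  have hC : ∀ x, x ∈ C ↔ ∀ n, x ∈ (D n).1 := fun x => Subring.mem_iInf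
  have key : ∀ n, ∀ d ∈ (D n).1, ∃ c ∈ C, d - c ∈ m ^ (n + 1) := by
    intro n d hd
    have hg : ∀ n (d : A), ∃ d', d ∈ (D n).1 → d' ∈ (D (n + 1)).1 ∧ d - d' ∈ m ^ (n + 1) := by
      intro n d
      by_cases h : d ∈ (D n).1
      · obtain ⟨d', h1, h2⟩ := hS2 n (D n) d h
        exact ⟨d', fun _ => ⟨h1, h2⟩⟩
      · exact ⟨0, fun h' => absurd h' h⟩
    choose g hg using hg
    let x : ℕ → A := fun j => Nat.rec d (fun j x => g (n + j) x) j
    have hxs : ∀ j, x (j + 1) = g (n + j) (x j) := fun j => rfl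
    have hx : ∀ j, x j ∈ (D (n + j)).1 := by
      intro j
      induction j with
      | zero => exact hd
      | succ j ih => rw [hxs]; exact (hg _ _ ih).1
    have hx1 : ∀ j, x j - x (j + 1) ∈ m ^ (n + j + 1) := fun j => (hg _ _ (hx j)).2
    have hx2 : ∀ j k, x j - x (j + k) ∈ m ^ (n + j + 1) := by
      intro j k
      induction k with
      | zero => simp
      | succ k ih =>
        have : x j - x (j + (k + 1)) = (x j - x (j + k)) + (x (j + k) - x (j + k + 1)) := by
          rw [← add_assoc]; ring
        rw [this]
        exact add_mem ih (Ideal.pow_le_pow_right (by omega) (hx1 (j + k)))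
    obtain ⟨L, hL⟩ := IsPrecomplete.prec (I := m) (M := A) inferInstance (f := x) (by
      intro a b hab
      obtain ⟨k, rfl⟩ := Nat.exists_eq_add_of_le hab
      rw [SModEq.sub_mem]
      simpa using Ideal.pow_le_pow_right (by omega) (hx2 a k))
    have hL' : ∀ j, x j - L ∈ m ^ j := fun j => by
      have := hL j
      rw [SModEq.sub_mem] at this
      simpa using this
    have hL2 : ∀ j, x j - L ∈ m ^ (n + j + 1) := fun j => by
      have : x j - L = (x j - x (j + (n + 1))) + (x (j + (n + 1)) - L) := by ring
      rw [this]
      exact add_mem (hx2 j (n + 1)) (Ideal.pow_le_pow_right (by omega) (hL' (j + (n + 1))))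
    refine ⟨L, ?_, hL2 0⟩
    rw [hC]
    have hLD : ∀ j, L ∈ (D (n + j)).1 := fun j => by
      have : L = x j - (x j - L) := by ring
      rw [this]
      exact sub_mem (hx j) ((D (n + j)).2.1 _ (hL2 j))
    intro k
    exact hanti (by omega : k ≤ n + k) (hLD k)
  refine ⟨C, fun a => ?_, fun a ha => ?_, fun c hc hcm n => ?_⟩
  · obtain ⟨c, hc, h⟩ := key 0 a trivial
    exact ⟨c, hc, by rw [zero_add, pow_one] at h; exact h⟩
  · rw [hC]
    intro n
    obtain ⟨c, hc, hac⟩ := ha (n + 1)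
    have := add_mem ((hC c).1 hc n) ((D n).2.1 _ hac)
    simpa using this
  · obtain ⟨u, hu, hcu⟩ := (D n).2.2.2 c ((hC c).1 hc n) hcm
    obtain ⟨v, hv, huv⟩ := key n u hu
    refine ⟨v, hv, ?_⟩
    have : c - p * v = (c - p * u) + p * (u - v) := by ring
    rw [this]
    exact Ideal.pow_le_pow_right (Nat.le_succ n) (add_mem hcu (Ideal.mul_mem_left _ _ huv))

end

section
open IsLocalRing in
theorem t_lemma {A : Type} [CommRing A] [IsLocalRing A] [IsNoetherianRing A] [IsDomain A]
    [IsAdicComplete (maximalIdeal A) A] (C : Subring A)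
    (hcl : ∀ a, (∀ n, ∃ c ∈ C, a - c ∈ maximalIdeal A ^ n) → a ∈ C) (t : A) (ht : t ≠ 0) (c : A)
    (h : ∀ n, ∃ u ∈ C, c - t * u ∈ maximalIdeal A ^ n) : ∃ u ∈ C, c = t * u := by
  choose u hu hcu using h
  obtain ⟨k, hk⟩ := Ideal.exists_pow_inf_eq_pow_smul (maximalIdeal A) (M := A) (Ideal.span {t})
  have h1 : ∀ n x, t * x ∈ maximalIdeal A ^ (n + k) → x ∈ maximalIdeal A ^ n := by
    intro n x hx
    have h2 := hk (n + k) (by omega)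
    have h3 : t * x ∈ maximalIdeal A ^ (n + k) • (⊤ : Submodule A A) ⊓ Ideal.span {t} := by
      refine ⟨by simpa using hx, Ideal.mem_span_singleton.2 ⟨x, rfl⟩⟩
    rw [h2, Nat.add_sub_cancel] at h3
    have h4 : t * x ∈ maximalIdeal A ^ n * Ideal.span {t} := by
      have := Submodule.smul_mono (le_refl (maximalIdeal A ^ n)) (inf_le_right (a := maximalIdeal A ^ k • (⊤ : Submodule A A)) (b := Ideal.span {t}))
      exact this h3
    obtain ⟨z, hz, hzt⟩ := Ideal.mem_mul_span_singleton.1 h4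
    have : x = z := mul_left_cancel₀ ht (by rw [← hzt]; ring)
    rwa [this]
  have h2 : ∀ a b, a ≤ b → u (a + k) - u (b + k) ∈ maximalIdeal A ^ a := by
    intro a b hab
    apply h1
    have : t * (u (a + k) - u (b + k)) = (c - t * u (b + k)) - (c - t * u (a + k)) := by ring
    rw [this]
    exact sub_mem (Ideal.pow_le_pow_right (by omega) (hcu (b + k))) (hcu _)
  obtain ⟨L, hL⟩ := IsPrecomplete.prec (I := maximalIdeal A) (M := A) inferInstance (f := fun n => u (n + k)) (by
    intro a b hab
    rw [SModEq.sub_mem]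
    simpa using h2 a b hab)
  have hL' : ∀ j, u (j + k) - L ∈ maximalIdeal A ^ j := fun j => by
    have := hL j
    rw [SModEq.sub_mem] at this
    simpa using this
  refine ⟨L, hcl L fun n => ⟨_, hu (n + k), ?_⟩, ?_⟩
  · rw [← neg_sub]; exact neg_mem (hL' n)
  · rw [← sub_eq_zero]
    refine IsHausdorff.haus (I := maximalIdeal A) inferInstance _ fun n => ?_
    rw [SModEq.zero]
    have : c - t * L = (c - t * u (n + k)) + t * (u (n + k) - L) := by ring
    rw [this]
    simpa using add_mem (Ideal.pow_le_pow_right (by omega) (hcu (n + k))) (Ideal.mul_mem_left _ t (hL' n))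

open IsLocalRing in
theorem coeff_inv {A : Type} [CommRing A] [IsLocalRing A] (C : Subring A)
    (h0 : ∀ a, ∃ c ∈ C, a - c ∈ maximalIdeal A)
    (hcl : ∀ a, (∀ n, ∃ c ∈ C, a - c ∈ maximalIdeal A ^ n) → a ∈ C) (c : A) (hc : c ∈ C)
    (hcm : c ∉ maximalIdeal A) : ∃ b ∈ C, c * b = 1 := by
  have hu : IsUnit c := by simpa using hcm
  obtain ⟨b, hb⟩ := hu.exists_right_inv
  refine ⟨b, hcl b fun n => ?_, hb⟩
  obtain ⟨c1, hc1, hbc⟩ := h0 b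
  set e := 1 - c * c1 with he
  have hem : e ∈ maximalIdeal A := by
    have : e = c * (b - c1) := by rw [he, ← hb]; ring
    rw [this]; exact Ideal.mul_mem_left _ _ hbc
  have heC : e ∈ C := sub_mem (one_mem _) (mul_mem hc hc1)
  refine ⟨c1 * ∑ i ∈ Finset.range n, e ^ i, mul_mem hc1 (sum_mem fun i _ => pow_mem heC i), ?_⟩
  have h2 : (1 - e) * ∑ i ∈ Finset.range n, e ^ i = 1 - e ^ n := mul_neg_geom_sum e n
  have : b - c1 * ∑ i ∈ Finset.range n, e ^ i = b * e ^ n := by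
    have h3 : c1 = b * (1 - e) := by
      rw [he]; linear_combination (-c1) * hb
    calc b - c1 * ∑ i ∈ Finset.range n, e ^ i = b - b * ((1 - e) * ∑ i ∈ Finset.range n, e ^ i) := by
          conv_lhs => rw [h3]
          ring
      _ = _ := by rw [h2]; ring
  rw [this]
  exact Ideal.mul_mem_left _ _ (Ideal.pow_mem_pow hem n)

/-- data of a coefficient ring -/
structure CoeffData (A : Type) [CommRing A] [IsLocalRing A] (C : Subring A) (π : C) : Prop where
  res : ∀ a : A, ∃ c : C, a - (c : A) ∈ IsLocalRing.maximalIdeal A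
  pim : (π : A) ∈ IsLocalRing.maximalIdeal A
  dvd : ∀ c : C, (c : A) ∈ IsLocalRing.maximalIdeal A → π ∣ c
  noeth : IsNoetherianRing C
  normal : IsIntegrallyClosed C
  complete : IsAdicComplete (Ideal.span {π}) C
  char : CharZero A ∨ IsField C
  
theorem CoeffData.ofField {A : Type} [CommRing A] [IsLocalRing A] (C : Subring A) (h : IsField C)
    (h0 : ∀ a, ∃ c ∈ C, a - c ∈ IsLocalRing.maximalIdeal A) : CoeffData A C 0 := by
  let _ := h.toField
  refine ⟨fun a => ?_, by simp, fun c hc => ?_, ?_, ?_, ?_, Or.inr h⟩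
  · obtain ⟨c, hc, h⟩ := h0 a
    exact ⟨⟨c, hc⟩, h⟩
  · by_contra hc0
    have : c ≠ 0 := fun h => hc0 (by simp [h])
    obtain ⟨b, hb⟩ := h.mul_inv_cancel this
    have h1 : (c : A) * b = 1 := by simpa using congrArg Subtype.val hb
    have : (1 : A) ∈ IsLocalRing.maximalIdeal A := by
      rw [← h1]; exact Ideal.mul_mem_right _ _ hc
    simp at this
  · have : IsNoetherianRing C := inferInstance
    exact this
  · have : IsIntegrallyClosed C := inferInstance
    exact this
  · rw [Ideal.span_singleton_zero]
    infer_instance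

open IsLocalRing in
theorem coeff_p {A : Type} [CommRing A] [IsLocalRing A] [IsNoetherianRing A] [IsDomain A]
    [IsAdicComplete (maximalIdeal A) A] (p : ℕ) [hp : Fact p.Prime] (hpm : (p : A) ∈ maximalIdeal A) :
    ∃ (C : Subring A) (π : C), CoeffData A C π := by
  obtain ⟨C, h0, hcl, h1⟩ := exists_coeff_ring p hpm
  have hcpx : ∀ x : C, (x : A) ∉ maximalIdeal A → IsUnit x := by
    intro x hx
    obtain ⟨b, hb, hb1⟩ := coeff_inv C h0 hcl x x.2 hx
    exact IsUnit.of_mul_eq_one ⟨b, hb⟩ (Subtype.ext hb1)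
  by_cases hp0 : (p : A) = 0
  · refine ⟨C, 0, CoeffData.ofField C ⟨⟨0, 1, zero_ne_one⟩, mul_comm, fun {x} hx => ?_⟩ h0⟩
    refine (hcpx x fun hxm => hx (Subtype.ext ?_)).exists_right_inv
    refine IsHausdorff.haus (I := maximalIdeal A) inferInstance _ fun n => ?_
    rw [SModEq.zero]
    obtain ⟨u, hu, h⟩ := h1 x x.2 hxm n
    simpa [hp0] using h
  · have hpC : ((p : C) : A) = p := by simp
    have hpC0 : (p : C) ≠ 0 := fun h => hp0 (by rw [← hpC, h]; rfl)
    have hdvd : ∀ c : C, (c : A) ∈ maximalIdeal A → (p : C) ∣ c := by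
      intro c hc
      obtain ⟨u, hu, h⟩ := t_lemma C hcl p hp0 c (h1 c c.2 hc)
      exact ⟨⟨u, hu⟩, Subtype.ext (by simpa using h)⟩
    have hhaus : ∀ x : C, (∀ n, (p : C) ^ n ∣ x) → x = 0 := by
      intro x hx
      refine Subtype.ext (IsHausdorff.haus (I := maximalIdeal A) inferInstance _ fun n => ?_)
      rw [SModEq.zero]
      obtain ⟨y, hy⟩ := hx n
      have : (x : A) = p ^ n * y := by rw [hy]; simp
      rw [this]
      simpa using Ideal.mul_mem_right _ _ (Ideal.pow_mem_pow hpm n)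
    have hnu : ¬ IsUnit (p : C) := fun h => by
      have := h.map C.subtype
      rw [mem_maximalIdeal] at hpm
      exact hpm (by simpa using this)
    have hdvr : IsDiscreteValuationRing C := by
      apply IsDiscreteValuationRing.ofHasUnitMulPowIrreducibleFactorization
      refine ⟨(p : C), ⟨hnu, fun {a b} hab => ?_⟩, fun {x} hx => ?_⟩
      · by_contra hcon
        push Not at hcon
        have ha : (a : A) ∈ maximalIdeal A := by by_contra h; exact hcon.1 (hcpx _ h)
        have hb : (b : A) ∈ maximalIdeal A := by by_contra h; exact hcon.2 (hcpx _ h)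
        obtain ⟨a', rfl⟩ := hdvd a ha
        obtain ⟨b', rfl⟩ := hdvd b hb
        apply hnu
        refine IsUnit.of_mul_eq_one (a' * b') (mul_left_cancel₀ hpC0 ?_)
        rw [mul_one]; conv_rhs => rw [hab]
        ring
      · have : ∃ n, ¬ (p : C) ^ n ∣ x := by
          by_contra h; push Not at h; exact hx (hhaus x h)
        classical
        have hs := Nat.find_spec this
        obtain ⟨n, hn⟩ : ∃ n, Nat.find this = n + 1 := by
          refine Nat.exists_eq_succ_of_ne_zero fun h => ?_
          rw [h] at hs; simp at hs
        have hm := Nat.find_min this (m := n) (by omega)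
        push Not at hm
        obtain ⟨y, hy⟩ := hm
        have hyu : IsUnit y := by
          refine hcpx y fun h => hs ?_
          obtain ⟨z, rfl⟩ := hdvd y h
          rw [hn, hy]
          exact ⟨z, by ring⟩
        refine ⟨n, hyu.unit, ?_⟩
        simp [hy]
    refine ⟨C, p, ⟨fun a => ?_, by simpa using hpm, hdvd, inferInstance, inferInstance, ?_, Or.inl ?_⟩⟩
    · obtain ⟨c, hc, h⟩ := h0 a
      exact ⟨⟨c, hc⟩, h⟩
    · refine { haus' := fun x hx => hhaus x fun n => ?_, prec' := fun f hf => ?_ }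
      · have := hx n
        rw [SModEq.zero, Ideal.span_singleton_pow] at this
        simpa [Ideal.mem_span_singleton] using this
      · have hf' : ∀ {a b}, a ≤ b → ∃ y : C, (f a : A) - f b = p ^ a * y := by
          intro a b hab
          have := hf hab
          rw [SModEq.sub_mem, Ideal.span_singleton_pow] at this
          simp only [smul_eq_mul, Ideal.mul_top, Ideal.mem_span_singleton] at this
          obtain ⟨y, hy⟩ := this
          exact ⟨y, by simpa using congrArg Subtype.val hy⟩
        obtain ⟨L, hL⟩ := IsPrecomplete.prec (I := maximalIdeal A) (M := A) inferInstance
          (f := fun n => (f n : A)) (by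
            intro a b hab
            obtain ⟨y, hy⟩ := hf' hab
            rw [SModEq.sub_mem, hy]
            simpa using Ideal.mul_mem_right _ _ (Ideal.pow_mem_pow hpm a))
        have hL' : ∀ j, (f j : A) - L ∈ maximalIdeal A ^ j := fun j => by
          have := hL j
          rw [SModEq.sub_mem] at this
          simpa using this
        have hLC : L ∈ C := hcl L fun n => ⟨f n, (f n).2, by rw [← neg_sub]; exact neg_mem (hL' n)⟩
        refine ⟨⟨L, hLC⟩, fun n => ?_⟩
        rw [SModEq.sub_mem, Ideal.span_singleton_pow]
        simp only [smul_eq_mul, Ideal.mul_top, Ideal.mem_span_singleton]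
        obtain ⟨u, hu, h⟩ := t_lemma C hcl (p ^ n : A) (pow_ne_zero _ hp0) (f n - L) (by
          intro k
          obtain ⟨y, hy⟩ := hf' (le_max_left n k)
          refine ⟨y, y.2, ?_⟩
          have : (f n : A) - L - p ^ n * y = f (max n k) - L := by rw [← hy]; ring
          rw [this]
          exact Ideal.pow_le_pow_right (le_max_right n k) (hL' _))
        exact ⟨⟨u, hu⟩, Subtype.ext (by simpa using h)⟩
    · obtain ⟨q, hq⟩ := CharP.exists A
      rcases CharP.char_is_prime_or_zero A q with h | h
      · exfalso
        have hq0 : (q : A) = 0 := CharP.cast_eq_zero A q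
        have hpq : p ≠ q := fun h => hp0 (by rw [h, hq0])
        have hco := (Nat.coprime_primes hp.out h).2 hpq
        have := Nat.isCoprime_iff_coprime.2 hco
        obtain ⟨a, b, hab⟩ := this
        have h1 : (a : A) * p + b * q = 1 := by exact_mod_cast congrArg (Int.cast : ℤ → A) hab
        rw [hq0, mul_zero, add_zero] at h1
        have : (1 : A) ∈ maximalIdeal A := by rw [← h1]; exact Ideal.mul_mem_left _ _ hpm
        simp at this
      · subst h
        exact CharP.charP_to_charZero A

end

section
theorem fs_field (K : Type) [Field K] [Algebra ℚ K] : Algebra.FormallySmooth ℚ K := by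
  obtain ⟨s, hs⟩ := exists_isTranscendenceBasis ℚ K
  have := hs.isAlgebraic_field
  have : CharZero K := algebraRat.charZero K
  exact Algebra.FormallySmooth.of_algebraicIndependent_of_isSeparable hs.1

open IsLocalRing in
theorem coeff_zero {A : Type} [CommRing A] [IsLocalRing A]
    [IsAdicComplete (maximalIdeal A) A] (h : ∀ n : ℕ, n ≠ 0 → (n : A) ∉ maximalIdeal A) :
    ∃ (C : Subring A) (π : C), CoeffData A C π := by
  have hI : ∀ I : Ideal A, I ≠ ⊤ → CharZero (A ⧸ I) := by
    intro I hI
    refine charZero_of_inj_zero fun n hn => ?_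
    by_contra h0
    apply h n h0
    apply le_maximalIdeal hI
    rw [← Ideal.Quotient.eq_zero_iff_mem]
    simpa using hn
  obtain ⟨_⟩ := (EqualCharZero.nonempty_algebraRat_iff A).2 hI
  have hs : Algebra.FormallySmooth ℚ (A ⧸ maximalIdeal A) :=
    @fs_field (A ⧸ maximalIdeal A) (Ideal.Quotient.field _) (Ideal.instAlgebraQuotient ℚ _)
  obtain ⟨g, hg⟩ := Algebra.FormallySmooth.exists_mkₐ_comp_eq_of_isAdicComplete (R := ℚ)
    (AlgHom.id ℚ (A ⧸ maximalIdeal A))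
  have hg' : ∀ x, Ideal.Quotient.mk (maximalIdeal A) (g x) = x := fun x => by
    simpa using congr($hg x)
  refine ⟨g.toRingHom.range, 0, CoeffData.ofField _ ?_ fun a => ?_⟩
  · let fk : Field (A ⧸ maximalIdeal A) := Ideal.Quotient.field _
    exact MulEquiv.isField (Field.toIsField (A ⧸ maximalIdeal A))
      (RingEquiv.ofBijective g.toRingHom.rangeRestrict
        ⟨RingHom.injective _, RingHom.rangeRestrict_surjective _⟩).symm.toMulEquiv
  · refine ⟨_, ⟨Ideal.Quotient.mk _ a, rfl⟩, ?_⟩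
    rw [← Ideal.Quotient.eq_zero_iff_mem, map_sub, sub_eq_zero]
    exact (hg' _).symm

open IsLocalRing in
theorem coeff_exists (A : Type) [CommRing A] [IsLocalRing A] [IsNoetherianRing A] [IsDomain A]
    [IsAdicComplete (maximalIdeal A) A] : ∃ (C : Subring A) (π : C), CoeffData A C π := by
  by_cases h : ∀ n : ℕ, n ≠ 0 → (n : A) ∉ maximalIdeal A
  · exact coeff_zero h
  · push Not at h
    obtain ⟨n, hn, hnm⟩ := h
    obtain ⟨q, hq⟩ := CharP.exists (ResidueField A)
    have h0 : ∀ n : ℕ, (n : A) ∈ maximalIdeal A ↔ q ∣ n := by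
      intro n
      rw [← CharP.cast_eq_zero_iff (ResidueField A) q, ← residue_eq_zero_iff]
      simp
    rcases CharP.char_is_prime_or_zero (ResidueField A) q with hp | hp
    · have : Fact q.Prime := ⟨hp⟩
      exact coeff_p q ((h0 q).2 dvd_rfl)
    · subst hp
      exact absurd (zero_dvd_iff.1 ((h0 n).1 hnm)) hn

end

section
open MvPowerSeries in
theorem exists_mv_eval {C A : Type} [CommRing C] [CommRing A] [Algebra C A] (I : Ideal A)
    [IsAdicComplete I A] (r : ℕ) (x : Fin r → A) (hx : ∀ i, x i ∈ I) :
    ∃ φ : MvPowerSeries (Fin r) C →ₐ[C] A, ∀ i, φ (X i) = x i := by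
  have hI : ∀ n, MvPolynomial.idealOfVars (Fin r) C ^ n ≤ (I ^ n).comap (MvPolynomial.aeval x : MvPolynomial (Fin r) C →ₐ[C] A) := by
    intro n
    have : MvPolynomial.idealOfVars (Fin r) C ≤ I.comap (MvPolynomial.aeval x : MvPolynomial (Fin r) C →ₐ[C] A) := by
      rw [MvPolynomial.idealOfVars, Ideal.span_le]
      rintro _ ⟨i, rfl⟩
      simpa using hx i
    exact (Ideal.pow_right_mono this n).trans (Ideal.le_comap_pow _ n)
  let f : ∀ n, MvPowerSeries (Fin r) C →ₐ[C] A ⧸ I ^ n := fun n =>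
    (Ideal.quotientMapₐ (I ^ n) (MvPolynomial.aeval x : MvPolynomial (Fin r) C →ₐ[C] A) (hI n)).comp
      ((truncTotalAlgHom (Fin r) C n).restrictScalars C)
  have hf0 : ∀ n p, f n p = Ideal.Quotient.mk (I ^ n) (MvPolynomial.aeval x (truncTotal n p)) := fun n p => rfl
  refine ⟨IsAdicComplete.liftAlgHom I f ?_, fun i => ?_⟩
  · intro m n hle
    ext p
    simp only [AlgHom.comp_apply, hf0]
    change Ideal.Quotient.mk (I ^ m) _ = _
    rw [← sub_eq_zero, ← map_sub, ← map_sub, Ideal.Quotient.eq_zero_iff_mem]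
    exact hI m (truncTotal_sub_truncTotal_mem_pow_idealOfVars hle le_rfl p)
  · rw [← sub_eq_zero]
    refine IsHausdorff.haus (I := I) inferInstance _ fun n => ?_
    rw [SModEq.zero, smul_eq_mul, Ideal.mul_top, ← Ideal.Quotient.eq_zero_iff_mem, map_sub]
    rw [IsAdicComplete.mk_liftAlgHom, hf0]
    have : x i = MvPolynomial.aeval x (MvPolynomial.X i : MvPolynomial (Fin r) C) := by simp
    conv_lhs => rw [this]
    rw [← map_sub, ← map_sub, Ideal.Quotient.eq_zero_iff_mem]
    refine hI n ((MvPolynomial.mem_pow_idealOfVars_iff' ..).mpr fun y hy => ?_)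
    rw [MvPolynomial.coeff_sub, coeff_truncTotal _ hy, ← MvPolynomial.coe_X, MvPolynomial.coeff_coe, sub_self]

end

section
open IsLocalRing

theorem approx_fg {A : Type} [CommRing A] [IsLocalRing A] [IsNoetherianRing A] (C : Subring A)
    (h0 : ∀ a : A, ∃ c : C, a - (c : A) ∈ maximalIdeal A) (k : ℕ) :
    ∃ N : Submodule C A, N.FG ∧ ∀ a, ∃ y ∈ N, a - y ∈ maximalIdeal A ^ k := by
  induction k with
  | zero => exact ⟨⊥, Submodule.fg_bot, fun a => ⟨0, by simp, by simp⟩⟩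
  | succ k ih =>
    obtain ⟨N, hN, h⟩ := ih
    obtain ⟨s, hs⟩ := (IsNoetherian.noetherian (maximalIdeal A ^ k))
    refine ⟨N ⊔ Submodule.span C (s : Set A), hN.sup ⟨s, rfl⟩, fun a => ?_⟩
    have h1 : ∀ z ∈ Submodule.span A (s : Set A), ∃ y ∈ Submodule.span C (s : Set A), z - y ∈ maximalIdeal A ^ (k + 1) := by
      intro z hz
      induction hz using Submodule.span_induction with
      | mem x hx => exact ⟨x, Submodule.subset_span hx, by simp⟩
      | zero => exact ⟨0, zero_mem _, by simp⟩
      | add x y hx hy hx' hy' =>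
        obtain ⟨u, hu, hu'⟩ := hx'
        obtain ⟨v, hv, hv'⟩ := hy'
        refine ⟨u + v, add_mem hu hv, ?_⟩
        rw [add_sub_add_comm]; exact add_mem hu' hv'
      | smul b x hx hx' =>
        obtain ⟨u, hu, hu'⟩ := hx'
        obtain ⟨c, hc⟩ := h0 b
        refine ⟨c • u, Submodule.smul_mem _ _ hu, ?_⟩
        have e : b • x - c • u = (b - c) * x + c * (x - u) := by
          rw [Subring.smul_def]; simp only [smul_eq_mul]; ring
        rw [e]
        have hxm : x ∈ maximalIdeal A ^ k := by rw [← hs]; exact hx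
        refine add_mem ?_ (Ideal.mul_mem_left _ _ hu')
        rw [pow_succ']
        exact Ideal.mul_mem_mul hc hxm
    obtain ⟨y, hy, hay⟩ := h a
    rw [← hs] at hay
    obtain ⟨z, hz, hz'⟩ := h1 _ hay
    exact ⟨y + z, Submodule.add_mem_sup hy hz, by rw [← sub_sub]; exact hz'⟩

theorem finite_base {A : Type} [CommRing A] [IsLocalRing A] [IsNoetherianRing A] (C : Subring A)
    (π : C) (hC : CoeffData A C π) (r : ℕ) (x : Fin r → A) (hx : ∀ i, x i ∈ maximalIdeal A)
    (K : ℕ) (hK : maximalIdeal A ^ K ≤ Ideal.span (insert (π : A) (Set.range x)))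
    [Algebra (MvPowerSeries (Fin r) C) A] [IsScalarTower C (MvPowerSeries (Fin r) C) A]
    (hφ : ∀ i, algebraMap (MvPowerSeries (Fin r) C) A (MvPowerSeries.X i) = x i) :
    Module.Finite (MvPowerSeries (Fin r) C) A := by
  have hcomp := hC.complete
  let J : Ideal A := Ideal.span (Set.range x)
  have hfin : Module.Finite C (A ⧸ J) := by
    have : IsHausdorff (Ideal.span {π}) (A ⧸ J) := by
      refine IsHausdorff.of_map (S := A) (J := maximalIdeal A) ?_
      rw [Ideal.map_span, Ideal.span_le]
      simpa using! hC.pim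
    obtain ⟨N, hN, h⟩ := approx_fg C hC.res K
    let f : A →ₗ[C] A ⧸ J := (Ideal.Quotient.mkₐ C J).toLinearMap
    refine finite_of_complete (Ideal.span {π}) (N.map f) (hN.map f) fun y => ?_
    obtain ⟨a, rfl⟩ := Ideal.Quotient.mk_surjective y
    obtain ⟨b, hb, hab⟩ := h a
    refine ⟨f b, Submodule.mem_map_of_mem hb, ?_⟩
    have h2 := hK hab
    rw [Ideal.span_insert, Submodule.mem_sup] at h2
    obtain ⟨u, hu, v, hv, huv⟩ := h2
    obtain ⟨w, rfl⟩ := Ideal.mem_span_singleton.1 hu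
    have : Ideal.Quotient.mk J a - f b = π • Ideal.Quotient.mk J w := by
      change Ideal.Quotient.mk J a - Ideal.Quotient.mk J b = Ideal.Quotient.mk J ((π : A) * w)
      rw [← map_sub, ← huv, map_add, Ideal.Quotient.eq_zero_iff_mem.2 hv, add_zero]
    rw [this]
    exact Submodule.smul_mem_smul (Ideal.mem_span_singleton_self π) trivial
  let I : Ideal (MvPowerSeries (Fin r) C) := Ideal.span (Set.range MvPowerSeries.X)
  have hIJ : I.map (algebraMap _ A) = J := by
    rw [Ideal.map_span, ← Set.range_comp]
    congr 2
    ext i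
    exact hφ i
  have hJm : J ≤ maximalIdeal A := by
    rw [Ideal.span_le]; rintro _ ⟨i, rfl⟩; exact hx i
  have : IsHausdorff I A := IsHausdorff.of_map (S := A) (J := maximalIdeal A) (by rw [hIJ]; exact hJm)
  obtain ⟨s, hs⟩ := hfin
  classical
  let g : A ⧸ J → A := Function.surjInv Ideal.Quotient.mk_surjective
  have hg : ∀ y, Ideal.Quotient.mk J (g y) = y := Function.surjInv_eq _
  refine finite_of_complete I (Submodule.span _ (s.image g : Set A)) ⟨_, rfl⟩ fun a => ?_
  have key : ∀ z : A ⧸ J, ∃ y ∈ Submodule.span (MvPowerSeries (Fin r) C) (s.image g : Set A), Ideal.Quotient.mk J y = z := by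
    intro z
    have hz : z ∈ Submodule.span C (s : Set (A ⧸ J)) := by rw [hs]; trivial
    induction hz using Submodule.span_induction with
    | mem z hz => exact ⟨g z, Submodule.subset_span (by simpa using! ⟨z, hz, rfl⟩), hg z⟩
    | zero => exact ⟨0, zero_mem _, by simp⟩
    | add u v _ _ hu hv =>
      obtain ⟨u', hu, rfl⟩ := hu
      obtain ⟨v', hv, rfl⟩ := hv
      exact ⟨u' + v', add_mem hu hv, by simp⟩
    | smul c u _ hu =>
      obtain ⟨u', hu, rfl⟩ := hu
      refine ⟨algebraMap C (MvPowerSeries (Fin r) C) c • u', Submodule.smul_mem _ _ hu, ?_⟩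
      rw [algebraMap_smul]
      rfl
  obtain ⟨y, hy, hya⟩ := key (Ideal.Quotient.mk J a)
  refine ⟨y, hy, ?_⟩
  have h3 : a - y ∈ J := Ideal.Quotient.eq.1 hya.symm
  rw [← hIJ] at h3
  rw [← Submodule.restrictScalars_mem (MvPowerSeries (Fin r) C), ← Ideal.smul_top_eq_map] at h3
  exact h3

theorem inj_of_dim {B A : Type} [CommRing B] [IsDomain B] [CommRing A] [Algebra B A]
    [Algebra.IsIntegral B A] (h : ringKrullDim B ≤ ringKrullDim A) (d : ℕ) (hA : ringKrullDim A = d) :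
    Function.Injective (algebraMap B A) := by
  let S := (algebraMap B A).range
  have hS : Algebra.IsIntegral S A := by
    constructor
    intro a
    obtain ⟨q, hq, hqa⟩ := Algebra.IsIntegral.isIntegral (R := B) a
    refine ⟨q.map (algebraMap B A).rangeRestrict, hq.map _, ?_⟩
    rw [Polynomial.eval₂_map]
    exact hqa
  have h1 : ringKrullDim A ≤ ringKrullDim S := by
    refine Order.krullDim_le_of_strictMono (PrimeSpectrum.comap (algebraMap S A)) ?_
    intro P Q hPQ
    exact Ideal.IsIntegral.comap_lt_comap (R := S) hPQ
  rw [injective_iff_map_eq_zero]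
  intro b hb
  by_contra hb0
  have h2 := ringKrullDim_succ_le_of_surjective (algebraMap B A).rangeRestrict
    (RingHom.rangeRestrict_surjective _) (mem_nonZeroDivisors_of_ne_zero hb0) (Subtype.ext hb)
  have h3 : ringKrullDim A + 1 ≤ ringKrullDim A := (add_le_add_left h1 1).trans (h2.trans h)
  rw [hA] at h3
  have : ((d + 1 : ℕ) : WithBot ℕ∞) ≤ (d : ℕ) := by exact_mod_cast h3
  have := Nat.cast_le.1 this
  omega

end

section
open IsLocalRing

theorem exists_sop (A : Type) [CommRing A] [IsLocalRing A] [IsNoetherianRing A] :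
    ∃ (r : ℕ) (x : Fin r → A) (K : ℕ), ringKrullDim A = r ∧ (∀ i, x i ∈ maximalIdeal A) ∧
      maximalIdeal A ^ K ≤ Ideal.span (Set.range x) := by
  obtain ⟨s, hs, hc⟩ := Ideal.exists_finset_card_eq_height_of_isNoetherianRing (maximalIdeal A)
  have hrange : Set.range (fun i => ((s.equivFin.symm i : s) : A)) = s := by
    ext y
    constructor
    · rintro ⟨i, rfl⟩; exact (s.equivFin.symm i).2
    · intro hy; exact ⟨s.equivFin ⟨y, hy⟩, by simp⟩
  have hrad : (Ideal.span (s : Set A)).radical = maximalIdeal A := by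
    apply le_antisymm
    · exact (Ideal.IsPrime.radical_le_iff inferInstance).2 hs.1.2
    · rw [Ideal.radical_eq_sInf]
      refine le_sInf fun P hP => ?_
      exact hs.2 ⟨hP.2, hP.1⟩ (le_maximalIdeal hP.2.ne_top)
  obtain ⟨K, hK⟩ := Ideal.exists_radical_pow_le_of_fg (Ideal.span (s : Set A)) (IsNoetherian.noetherian _)
  refine ⟨s.card, fun i => s.equivFin.symm i, K, ?_, fun i => ?_, ?_⟩
  · rw [← maximalIdeal_height_eq_ringKrullDim, ← hc]
    rfl
  · exact hs.1.2 (Ideal.subset_span (s.equivFin.symm i).2)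
  · rw [hrange, ← hrad]; exact hK

theorem CoeffData.unit {A : Type} [CommRing A] [IsLocalRing A] {C : Subring A} {π : C}
    (hC : CoeffData A C π) (c : C) (hc : (c : A) ∉ maximalIdeal A) : IsUnit c := by
  have hu : IsUnit (c : A) := by simpa using hc
  obtain ⟨b, hb⟩ := hu.exists_right_inv
  obtain ⟨c', hc'⟩ := hC.res b
  have h1 : ((1 - c * c' : C) : A) ∈ maximalIdeal A := by
    have : ((1 - c * c' : C) : A) = c * (b - c') := by
      push_cast; rw [← hb]; ring
    rw [this]; exact Ideal.mul_mem_left _ _ hc'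
  obtain ⟨z, hz⟩ := hC.dvd _ h1
  have := hC.complete
  have hj := IsAdicComplete.le_jacobson_bot (Ideal.span {π}) (Ideal.mem_span_singleton_self π)
  rw [Ideal.mem_jacobson_bot] at hj
  have h2 := hj (-z)
  have h3 : π * -z + 1 = c * c' := by
    rw [mul_neg, ← hz]; ring
  rw [h3] at h2
  exact isUnit_of_mul_isUnit_left h2

theorem CoeffData.dim {A : Type} [CommRing A] [IsLocalRing A] [IsNoetherianRing A] [IsDomain A] {C : Subring A} {π : C}
    (hC : CoeffData A C π) : ringKrullDim (A ⧸ Ideal.span {(π : A)}) + ringKrullDim C ≤ ringKrullDim A := by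
  by_cases h0 : π = 0
  · have hF : IsField C := by
      refine ⟨⟨0, 1, zero_ne_one⟩, mul_comm, fun {x} hx => ?_⟩
      refine (hC.unit x fun hm => hx ?_).exists_right_inv
      have := hC.dvd x hm
      rw [h0, zero_dvd_iff] at this
      exact this
    rw [ringKrullDim_eq_zero_of_isField hF, add_zero]
    exact ringKrullDim_quotient_le _
  · have hF : IsField (C ⧸ Ideal.span {π}) := by
      have : Nontrivial (C ⧸ Ideal.span {π}) := by
        rw [Ideal.Quotient.nontrivial_iff, Ne, Ideal.span_singleton_eq_top]
        intro h
        have h2 := h.map C.subtype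
        exact hC.pim h2
      refine ⟨⟨0, 1, zero_ne_one⟩, mul_comm, fun {x} hx => ?_⟩
      obtain ⟨c, rfl⟩ := Ideal.Quotient.mk_surjective x
      refine ((hC.unit c fun hm => hx ?_).map (Ideal.Quotient.mk _)).exists_right_inv
      rw [Ideal.Quotient.eq_zero_iff_mem, Ideal.mem_span_singleton]
      exact hC.dvd c hm
    have := hC.complete
    have := hC.noeth
    have h1 := ringKrullDim_le_ringKrullDim_quotient_add_card ({π} : Finset C) (by
      have := IsAdicComplete.le_jacobson_bot (Ideal.span {π}) (Ideal.mem_span_singleton_self π)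
      rw [Ideal.jacobson_bot] at this
      simpa using this)
    rw [Finset.coe_singleton, ringKrullDim_eq_zero_of_isField hF, zero_add, Finset.card_singleton] at h1
    have h2 := ringKrullDim_quotient_span_singleton_succ_eq_ringKrullDim_of_mem_nonZeroDivisors
      (x := (π : A)) (mem_nonZeroDivisors_of_ne_zero fun h => h0 (Subtype.ext h)) hC.pim
    rw [← h2]
    gcongr
    exact_mod_cast h1

theorem mv_const (C : Type) [CommRing C] (r : ℕ) (f : MvPowerSeries (Fin r) C) :
    ∃ c : C, MvPowerSeries.C c - f ∈ Ideal.span (Set.range (MvPowerSeries.X : Fin r → MvPowerSeries (Fin r) C)) := by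
  induction r with
  | zero =>
    refine ⟨MvPowerSeries.isEmptyEquiv (Fin 0) C f, ?_⟩
    have : MvPowerSeries.C ((MvPowerSeries.isEmptyEquiv (Fin 0) C) f) = f := by
      apply (MvPowerSeries.isEmptyEquiv (Fin 0) C).injective
      exact (MvPowerSeries.isEmptyEquiv (Fin 0) C).commutes _
    rw [this, sub_self]; exact zero_mem _
  | succ n ih =>
    set e := MvPowerSeries.finSuccEquiv C n
    obtain ⟨c, hc⟩ := ih (PowerSeries.constantCoeff (e f))
    refine ⟨c, ?_⟩
    obtain ⟨g, hg⟩ : PowerSeries.X ∣ PowerSeries.C (PowerSeries.constantCoeff (e f)) - e f := by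
      rw [PowerSeries.X_dvd_iff]; simp
    have h1 : MvPowerSeries.C c - f = e.symm (PowerSeries.C (MvPowerSeries.C c - PowerSeries.constantCoeff (e f)))
        + MvPowerSeries.X 0 * e.symm g := by
      apply e.injective
      rw [map_add, map_mul, e.apply_symm_apply, e.apply_symm_apply, MvPowerSeries.finSuccEquiv_X_zero, ← hg,
        map_sub, map_sub, MvPowerSeries.finSuccEquiv_C]
      ring
    rw [h1]
    refine add_mem ?_ (Ideal.mul_mem_right _ _ (Ideal.subset_span ⟨0, rfl⟩))
    have h2 := Ideal.mem_map_of_mem ((e.symm : _ →+* MvPowerSeries (Fin (n+1)) C).comp PowerSeries.C) hc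
    rw [Ideal.map_span] at h2
    refine Ideal.span_mono ?_ h2
    rintro _ ⟨_, ⟨i, rfl⟩, rfl⟩
    refine ⟨i.succ, ?_⟩
    apply e.injective
    rw [MvPowerSeries.finSuccEquiv_X_succ]
    exact (e.apply_symm_apply _).symm

theorem dim_mv (C : Type) [CommRing C] [IsNoetherianRing C] (r : ℕ) :
    ringKrullDim (MvPowerSeries (Fin r) C) ≤ r + ringKrullDim C := by
  have h1 := ringKrullDim_le_ringKrullDim_quotient_add_encard
    (Set.range (MvPowerSeries.X : Fin r → MvPowerSeries (Fin r) C)) (by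
      rw [← Ideal.jacobson_bot]
      exact Ideal.subset_span.trans (IsAdicComplete.le_jacobson_bot (Ideal.span (Set.range MvPowerSeries.X))))
  refine h1.trans ?_
  rw [add_comm]
  refine add_le_add ?_ ?_
  · have : (Set.range (MvPowerSeries.X : Fin r → MvPowerSeries (Fin r) C)).encard ≤ r := by
      rw [← Set.image_univ]
      refine (Set.encard_image_le _ _).trans ?_
      simp
    exact_mod_cast this
  · refine ringKrullDim_le_of_surjective ((Ideal.Quotient.mk _).comp MvPowerSeries.C) ?_
    intro y
    obtain ⟨f, rfl⟩ := Ideal.Quotient.mk_surjective y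
    obtain ⟨c, hc⟩ := mv_const C r f
    exact ⟨c, by rw [RingHom.comp_apply, Ideal.Quotient.eq]; exact hc⟩

theorem N2_mv {A : Type} [CommRing A] [IsLocalRing A] [IsDomain A] {C : Subring A} {π : C}
    (hC : CoeffData A C π) (r : ℕ) : N2 (MvPowerSeries (Fin r) C) := by
  have := hC.noeth
  have := hC.normal
  have h0 : CharZero A → N2 (MvPowerSeries (Fin r) C) := by
    intro h
    have : CharZero C := (RingHom.charZero_iff (ϕ := C.subtype) Subtype.val_injective).2 h
    have : CharZero (MvPowerSeries (Fin r) C) :=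
      (RingHom.charZero_iff (ϕ := MvPowerSeries.C) (MvPowerSeries.C_injective)).1 this
    have := mv_normal C r
    exact N2_of_charZero _
  rcases hC.char with h | h
  · exact h0 h
  · obtain ⟨p, hp⟩ := CharP.exists A
    rcases CharP.char_is_prime_or_zero A p with hpp | hpp
    · have : Fact p.Prime := ⟨hpp⟩
      have : CharP C p := (RingHom.charP_iff C.subtype Subtype.val_injective p).2 hp
      have hch : CharP (MvPowerSeries (Fin r) C) p :=
        (RingHom.charP_iff MvPowerSeries.C (MvPowerSeries.C_injective) p).1 this
      refine N2_of_charP p _ ?_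
      exact @mv_PI2 p _ C h.toField this r
    · subst hpp
      exact h0 (CharP.charP_to_charZero A)

theorem N1_complete (A : Type) [CommRing A] [IsLocalRing A] [IsNoetherianRing A] [IsDomain A]
    [IsAdicComplete (maximalIdeal A) A] : Module.Finite A (integralClosure A (FractionRing A)) := by
  obtain ⟨C, π, hC⟩ := coeff_exists A
  have := hC.noeth
  have hpi : Ideal.span {(π : A)} ≤ maximalIdeal A := by
    rw [Ideal.span_singleton_le_iff_mem]; exact hC.pim
  have : Nontrivial (A ⧸ Ideal.span {(π : A)}) := by
    rw [Ideal.Quotient.nontrivial_iff]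
    intro h; rw [h, top_le_iff] at hpi; exact Ideal.IsPrime.ne_top inferInstance hpi
  have : IsLocalRing (A ⧸ Ideal.span {(π : A)}) :=
    .of_surjective' (Ideal.Quotient.mk _) Ideal.Quotient.mk_surjective
  obtain ⟨r, y, K, hr, hy, hK⟩ := exists_sop (A ⧸ Ideal.span {(π : A)})
  have hmk : maximalIdeal A = (maximalIdeal (A ⧸ Ideal.span {(π : A)})).comap (Ideal.Quotient.mk (Ideal.span {(π : A)})) := by
    have := Ideal.comap_isMaximal_of_surjective (Ideal.Quotient.mk (Ideal.span {(π : A)})) Ideal.Quotient.mk_surjective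
      (K := maximalIdeal (A ⧸ Ideal.span {(π : A)}))
    exact (eq_maximalIdeal this).symm
  choose x hxy using fun i => Ideal.Quotient.mk_surjective (y i)
  have hx : ∀ i, x i ∈ maximalIdeal A := fun i => by
    rw [hmk, Ideal.mem_comap, hxy]; exact hy i
  have hK' : maximalIdeal A ^ K ≤ Ideal.span (insert (π : A) (Set.range x)) := by
    intro a ha
    have h1 : Ideal.Quotient.mk (Ideal.span {(π : A)}) a ∈ (Ideal.span (Set.range x)).map (Ideal.Quotient.mk (Ideal.span {(π : A)})) := by
      rw [Ideal.map_span, ← Set.range_comp]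
      have : (Ideal.Quotient.mk (Ideal.span {(π : A)})) ∘ x = y := funext hxy
      rw [this]
      apply hK
      have := Ideal.mem_map_of_mem (Ideal.Quotient.mk (Ideal.span {(π : A)})) ha
      rw [Ideal.map_pow] at this
      refine Ideal.pow_right_mono ?_ K this
      rw [Ideal.map_le_iff_le_comap, ← hmk]
    rw [Ideal.mem_map_iff_of_surjective _ Ideal.Quotient.mk_surjective] at h1
    obtain ⟨b, hb, hab⟩ := h1
    rw [Ideal.Quotient.eq] at hab
    have : a = -(b - a) + b := by ring
    rw [this, Ideal.span_insert]
    exact Submodule.add_mem_sup (neg_mem hab) hb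
  obtain ⟨φ, hφ⟩ := exists_mv_eval (C := C) (maximalIdeal A) r x hx
  let _ : Algebra (MvPowerSeries (Fin r) C) A := φ.toRingHom.toAlgebra
  have : IsScalarTower C (MvPowerSeries (Fin r) C) A := .of_algebraMap_eq fun c => (φ.commutes c).symm
  have hfin : Module.Finite (MvPowerSeries (Fin r) C) A := finite_base C π hC r x hx K hK' hφ
  have hd := hC.dim
  rw [hr] at hd
  obtain ⟨d, -, -, hdA, -⟩ := exists_sop A
  have hinj : Function.Injective (algebraMap (MvPowerSeries (Fin r) C) A) :=
    inj_of_dim ((dim_mv C r).trans hd) d hdA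
  have : FaithfulSMul (MvPowerSeries (Fin r) C) A := (faithfulSMul_iff_algebraMap_injective _ _).2 hinj
  let _ : Algebra (FractionRing (MvPowerSeries (Fin r) C)) (FractionRing A) :=
    FractionRing.liftAlgebra (MvPowerSeries (Fin r) C) (FractionRing A)
  have h2 : Module.Finite (MvPowerSeries (Fin r) C) (integralClosure (MvPowerSeries (Fin r) C) (FractionRing A)) :=
    N2_mv hC r (FractionRing (MvPowerSeries (Fin r) C)) (FractionRing A)
  let g : integralClosure (MvPowerSeries (Fin r) C) (FractionRing A) →ₗ[MvPowerSeries (Fin r) C] integralClosure A (FractionRing A) :=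
    { toFun := fun z => ⟨z.1, z.2.tower_top⟩
      map_add' := fun _ _ => rfl
      map_smul' := fun _ _ => rfl }
  have hg : Function.Surjective g := by
    rintro ⟨z, hz⟩
    exact ⟨⟨z, isIntegral_trans (R := MvPowerSeries (Fin r) C) z hz⟩, rfl⟩
  have h3 : Module.Finite (MvPowerSeries (Fin r) C) (integralClosure A (FractionRing A)) := .of_surjective g hg
  exact Module.Finite.of_restrictScalars_finite (MvPowerSeries (Fin r) C) A _

end

section
open IsLocalRing

theorem quot_complete (A : Type) [CommRing A] [IsLocalRing A] [IsNoetherianRing A]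
    [IsAdicComplete (maximalIdeal A) A] (P : Ideal A) [P.IsPrime] [IsLocalRing (A ⧸ P)] :
    IsAdicComplete (maximalIdeal (A ⧸ P)) (A ⧸ P) := by
  have hmk : maximalIdeal A = (maximalIdeal (A ⧸ P)).comap (algebraMap A (A ⧸ P)) := by
    have := Ideal.comap_isMaximal_of_surjective (algebraMap A (A ⧸ P)) Ideal.Quotient.mk_surjective
      (K := maximalIdeal (A ⧸ P))
    exact (eq_maximalIdeal this).symm
  have hm : maximalIdeal (A ⧸ P) = (maximalIdeal A).map (algebraMap A (A ⧸ P)) := by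
    rw [hmk]; exact (Ideal.map_comap_of_surjective (algebraMap A (A ⧸ P)) Ideal.Quotient.mk_surjective _).symm
  rw [hm, IsAdicComplete.map_algebraMap_iff]
  have h1 : IsPrecomplete (maximalIdeal A) (A ⧸ P) := by
    rw [← AdicCompletion.of_surjective_iff]
    have h2 := AdicCompletion.map_surjective (maximalIdeal A) (f := P.mkQ) P.mkQ_surjective
    have h3 : Function.Surjective (AdicCompletion.of (maximalIdeal A) A) :=
      AdicCompletion.of_surjective_iff.2 inferInstance
    intro y
    obtain ⟨z, rfl⟩ := h2 y
    obtain ⟨a, rfl⟩ := h3 z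
    exact ⟨P.mkQ a, (AdicCompletion.map_of (maximalIdeal A) P.mkQ a).symm⟩
  constructor

theorem completion_noeth (R : Type) [CommRing R] [IsLocalRing R] [IsNoetherianRing R] :
    IsNoetherianRing (AdicCompletion (maximalIdeal R) R) := by
  obtain ⟨r, x, hx⟩ := Submodule.fg_iff_exists_fin_generating_family.1 (IsNoetherian.noetherian (maximalIdeal R))
  have hmax := AdicCompletion.maximalIdeal_eq_map (R := R)
  obtain ⟨φ, hφ⟩ := exists_mv_eval (C := R) (maximalIdeal (AdicCompletion (maximalIdeal R) R)) r
    (fun i => algebraMap R _ (x i)) (fun i => by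
      rw [hmax]; refine Ideal.mem_map_of_mem _ ?_; rw [← hx]; exact Submodule.subset_span ⟨i, rfl⟩)
  have hI : (Ideal.span (Set.range (MvPowerSeries.X : Fin r → MvPowerSeries (Fin r) R))).map φ.toRingHom
      = maximalIdeal (AdicCompletion (maximalIdeal R) R) := by
    have h0 : (maximalIdeal R).map (algebraMap R (AdicCompletion (maximalIdeal R) R)) =
        (Ideal.span (Set.range x)).map (algebraMap R (AdicCompletion (maximalIdeal R) R)) :=
      congrArg (Ideal.map (algebraMap R (AdicCompletion (maximalIdeal R) R))) hx.symm
    rw [hmax, h0, Ideal.map_span, Ideal.map_span, ← Set.range_comp, ← Set.range_comp]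
    congr 2
    funext i
    exact hφ i
  have hs : Function.Surjective φ.toRingHom := by
    have : IsHausdorff ((Ideal.span (Set.range (MvPowerSeries.X : Fin r → MvPowerSeries (Fin r) R))).map φ.toRingHom)
      (AdicCompletion (maximalIdeal R) R) := by rw [hI]; infer_instance
    apply surjective_of_mk_map_comp_surjective (I := Ideal.span (Set.range (MvPowerSeries.X : Fin r → MvPowerSeries (Fin r) R)))
    intro y
    obtain ⟨a, rfl⟩ := Ideal.Quotient.mk_surjective y
    obtain ⟨z, hz⟩ := (AdicCompletion.residueField_map_bijective (R := R)).2 (residue _ a)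
    obtain ⟨c, rfl⟩ := residue_surjective z
    refine ⟨MvPowerSeries.C c, ?_⟩
    rw [RingHom.comp_apply, Ideal.Quotient.eq, hI]
    rw [ResidueField.map_residue] at hz
    have h4 : φ.toRingHom (MvPowerSeries.C c) = algebraMap R _ c := φ.commutes c
    rw [h4]
    exact Ideal.Quotient.eq.1 hz
  exact isNoetherianRing_of_surjective _ _ _ hs

theorem denom_of_finite (D : Type) [CommRing D] [IsDomain D]
    [Module.Finite D (integralClosure D (FractionRing D))] :
    ∃ e : D, e ≠ 0 ∧ ∀ y : FractionRing D, IsIntegral D y → ∃ c : D, e • y = algebraMap D _ c := by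
  obtain ⟨s, hs⟩ := Module.Finite.fg_top (R := D) (M := integralClosure D (FractionRing D))
  classical
  obtain ⟨b, hb⟩ := IsLocalization.exist_integer_multiples_of_finset (nonZeroDivisors D)
    (s.image (Subtype.val))
  refine ⟨b, nonZeroDivisors.ne_zero b.2, fun y hy => ?_⟩
  have : (⟨y, hy⟩ : integralClosure D (FractionRing D)) ∈ Submodule.span D (s : Set _) := by rw [hs]; trivial
  have key : ∀ z ∈ Submodule.span D (s : Set (integralClosure D (FractionRing D))), ∃ c : D, (b : D) • (z : FractionRing D) = algebraMap D _ c := by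
    intro z hz
    induction hz using Submodule.span_induction with
    | mem z hz =>
      obtain ⟨c, hc⟩ := hb z.1 (Finset.mem_image_of_mem _ hz)
      exact ⟨c, hc.symm⟩
    | zero => exact ⟨0, by simp⟩
    | add u v _ _ hu hv =>
      obtain ⟨c, hc⟩ := hu
      obtain ⟨d, hd⟩ := hv
      exact ⟨c + d, by simp [smul_add, hc, hd]⟩
    | smul a u _ hu =>
      obtain ⟨c, hc⟩ := hu
      exact ⟨a * c, by rw [map_mul, ← hc, ← Algebra.smul_def, smul_comm]; rfl⟩
  exact key _ this

theorem denom_reduced (B : Type) [CommRing B] [IsNoetherianRing B] [IsReduced B]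
    (hN : ∀ P ∈ minimalPrimes B, ∀ _ : P.IsPrime, Module.Finite (B ⧸ P) (integralClosure (B ⧸ P) (FractionRing (B ⧸ P)))) :
    ∃ e ∈ nonZeroDivisors B, ∀ (L : Type) [CommRing L] [Algebra B L] (S : Submonoid B) [IsLocalization S L],
      S ≤ nonZeroDivisors B → ∀ y : L, IsIntegral B y → ∃ c : B, e • y = algebraMap B L c := by
  classical
  have hpr : ∀ P : minimalPrimes B, P.1.IsPrime := fun P => P.2.1.1
  have hfin := minimalPrimes.finite_of_isNoetherianRing B
  let _ : Fintype (minimalPrimes B) := hfin.fintype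
  have hz : ∀ z : B, (∀ P : minimalPrimes B, z ∈ P.1) → z = 0 := by
    intro z h
    have h1 : z ∈ sInf (⊥ : Ideal B).minimalPrimes := by
      rw [Ideal.mem_sInf]; intro P hP; exact h ⟨P, hP⟩
    rw [Ideal.sInf_minimalPrimes] at h1
    obtain ⟨n, hn⟩ := h1
    exact eq_zero_of_pow_eq_zero (n := n) (by simpa using hn)
  have h1 : ∀ P : minimalPrimes B, ∃ e : B, e ∉ P.1 ∧ ∀ y : FractionRing (B ⧸ P.1), IsIntegral (B ⧸ P.1) y →
      ∃ c : B, algebraMap (B ⧸ P.1) _ (Ideal.Quotient.mk _ e) * y = algebraMap (B ⧸ P.1) _ (Ideal.Quotient.mk _ c) := by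
    intro P
    have := hpr P
    have := hN P.1 P.2 this
    obtain ⟨e, he, h⟩ := denom_of_finite (B ⧸ P.1)
    obtain ⟨e, rfl⟩ := Ideal.Quotient.mk_surjective e
    refine ⟨e, fun hh => he (Ideal.Quotient.eq_zero_iff_mem.2 hh), fun y hy => ?_⟩
    obtain ⟨c, hc⟩ := h y hy
    obtain ⟨c, rfl⟩ := Ideal.Quotient.mk_surjective c
    exact ⟨c, by rw [← hc, Algebra.smul_def]⟩
  choose e he h using h1
  have h2 : ∀ P : minimalPrimes B, ∃ f : B, f ∉ P.1 ∧ ∀ P' : minimalPrimes B, P' ≠ P → f ∈ P'.1 := by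
    intro P
    by_contra! hcon
    have h3 : (Finset.univ.erase P).inf (fun Q : minimalPrimes B => Q.1) ≤ P.1 := by
      intro f hf
      by_contra hfP
      obtain ⟨P', hP', hfP'⟩ := hcon f hfP
      rw [Submodule.mem_finsetInf] at hf
      exact hfP' (hf P' (by simp [hP']))
    obtain ⟨Q, hQ, hQP⟩ := ((hpr P).inf_le').1 h3
    have := hpr Q
    have : Q.1 = P.1 := le_antisymm hQP (P.2.2 ⟨hpr Q, bot_le⟩ hQP)
    simp at hQ
    exact hQ (Subtype.ext this)
  choose f hfP hf using h2
  have hsum : ∀ (g : minimalPrimes B → B) (P : minimalPrimes B),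
      Ideal.Quotient.mk P.1 (∑ Q, f Q * g Q) = Ideal.Quotient.mk P.1 (f P * g P) := by
    intro g P
    rw [map_sum]
    refine Finset.sum_eq_single P (fun Q _ hQ => ?_) (by simp)
    rw [Ideal.Quotient.eq_zero_iff_mem]
    exact Ideal.mul_mem_right _ _ (hf Q P hQ.symm)
  refine ⟨∑ P, f P * e P, ?_, ?_⟩
  · rw [mem_nonZeroDivisors_iff_right]
    intro z hzz
    apply hz
    intro P
    have := hpr P
    have h4 : Ideal.Quotient.mk P.1 (z * (f P * e P)) = 0 := by
      rw [map_mul, ← hsum e P, ← map_mul, hzz, map_zero]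
    rw [Ideal.Quotient.eq_zero_iff_mem] at h4
    rcases this.mem_or_mem h4 with h5 | h5
    · exact h5
    · rcases this.mem_or_mem h5 with h6 | h6
      · exact (hfP P h6).elim
      · exact (he P h6).elim
  · intro L _ _ S _ hS y hy
    obtain ⟨⟨a, s⟩, has⟩ := IsLocalization.surj S y
    have h5 : ∀ P : minimalPrimes B, ∃ c : B, e P * a - c * s ∈ P.1 := by
      intro P
      have := hpr P
      let ψ : B →+* FractionRing (B ⧸ P.1) := (algebraMap (B ⧸ P.1) (FractionRing (B ⧸ P.1))).comp (Ideal.Quotient.mk P.1)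
      have hu : ∀ s : S, IsUnit (ψ s) := by
        intro s
        rw [isUnit_iff_ne_zero]
        intro h0
        have h0' : Ideal.Quotient.mk P.1 (s : B) = 0 :=
          IsFractionRing.injective (B ⧸ P.1) (FractionRing (B ⧸ P.1)) (by rw [map_zero]; exact h0)
        rw [Ideal.Quotient.eq_zero_iff_mem] at h0'
        exact notMem_nonZeroDivisors_of_mem_mem_minimalPrimes h0' P.2 (hS s.2)
      let g : L →+* FractionRing (B ⧸ P.1) := IsLocalization.lift (M := S) hu
      have hg : ∀ b, g (algebraMap B L b) = ψ b := fun b => IsLocalization.lift_eq hu b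
      have hint : IsIntegral (B ⧸ P.1) (g y) := by
        refine hy.map_of_comp_eq (Ideal.Quotient.mk P.1) g ?_
        ext b
        exact (hg b).symm
      obtain ⟨c, hc⟩ := h P _ hint
      refine ⟨c, ?_⟩
      rw [← Ideal.Quotient.eq_zero_iff_mem]
      apply IsFractionRing.injective (B ⧸ P.1) (FractionRing (B ⧸ P.1))
      have h6 : g y * ψ s = ψ a := by rw [← hg, ← hg, ← map_mul, has]
      rw [map_sub, map_sub, map_mul, map_mul, map_mul, map_mul, ← hc, map_zero]
      change _ * ψ a - _ * g y * ψ s = 0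
      rw [← h6]; ring
    choose c hc using h5
    refine ⟨∑ P, f P * c P, ?_⟩
    have h7 : (∑ P, f P * e P) * a = (∑ P, f P * c P) * s := by
      rw [← sub_eq_zero]
      apply hz
      intro P
      rw [← Ideal.Quotient.eq_zero_iff_mem, map_sub, map_mul, map_mul, hsum, hsum, ← map_mul, ← map_mul, ← map_sub,
        Ideal.Quotient.eq_zero_iff_mem]
      have := Ideal.mul_mem_left P.1 (f P) (hc P)
      convert this using 1
      ring
    have hs : IsUnit (algebraMap B L s) := IsLocalization.map_units L s
    apply hs.mul_left_injective
    dsimp only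
    rw [Algebra.smul_def, mul_assoc, has, ← map_mul, ← map_mul, h7]

end

section
open IsLocalRing

open TensorProduct in
theorem finite_descent (R B : Type) [CommRing R] [CommRing B] [Algebra R B] [Module.FaithfullyFlat R B]
    [IsNoetherianRing B] [IsReduced B] [IsLocalRing B] [IsAdicComplete (maximalIdeal B) B] :
    Module.Finite R (integralClosure R (FractionRing R)) := by
  obtain ⟨e, he, h⟩ := denom_reduced B (by
    intro P hP hpr
    have : IsLocalRing (B ⧸ P) := .of_surjective' (Ideal.Quotient.mk _) Ideal.Quotient.mk_surjective
    have := quot_complete B P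
    exact N1_complete (B ⧸ P))
  have hL := h (B ⊗[R] FractionRing R) (Algebra.algebraMapSubmonoid B (nonZeroDivisors R)) (by
    rintro _ ⟨s, hs, rfl⟩
    have := Module.Flat.isSMulRegular_of_nonZeroDivisors (M := B) hs
    rw [mem_nonZeroDivisors_iff_right]
    intro z hz
    apply this
    simp only [smul_zero]
    rw [Algebra.smul_def, mul_comm]; exact hz)
  let N := Subalgebra.toSubmodule (integralClosure R (FractionRing R))
  let ι : B ⊗[R] N →ₗ[B] B ⊗[R] FractionRing R := AlgebraTensorModule.lTensor B B N.subtype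
  have hι : Function.Injective ι := Module.Flat.lTensor_preserves_injective_linearMap (M := B) N.subtype N.subtype_injective
  have hint : ∀ z, IsIntegral B (ι z) := by
    intro z
    induction z with
    | zero => rw [map_zero]; exact isIntegral_zero
    | add u v hu hv => rw [map_add]; exact hu.add hv
    | tmul b x =>
      have h1 : ι (b ⊗ₜ x) = b • (Algebra.TensorProduct.includeRight (R := R) (A := B) (x : FractionRing R)) := by
        simp [ι, smul_tmul']
      rw [h1]
      have hx : IsIntegral R (x : FractionRing R) := x.2
      have := (hx.map (Algebra.TensorProduct.includeRight (R := R) (A := B) (B := FractionRing R))).tower_top (A := B)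
      exact this.smul b
  have hflat : Module.Flat B (B ⊗[R] FractionRing R) := inferInstance
  have hreg := Module.Flat.isSMulRegular_of_nonZeroDivisors (M := B ⊗[R] FractionRing R) he
  let κ : B ⊗[R] N →ₗ[B] LinearMap.range (Algebra.linearMap B (B ⊗[R] FractionRing R)) :=
    LinearMap.codRestrict _ (e • ι) (fun z => by
      obtain ⟨c, hc⟩ := hL (ι z) (hint z)
      exact ⟨c, by simp [hc]⟩)
  have hκ : Function.Injective κ := by
    intro u v huv
    apply hι
    apply hreg
    exact congrArg Subtype.val huv
  have : Module.Finite B (B ⊗[R] N) := Module.Finite.of_injective κ hκ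
  exact Module.Finite.of_finite_tensorProduct_of_faithfullyFlat (R := R) (M := N) B

theorem finite_intClosure (R : Type) [CommRing R] [IsLocalRing R] [IsNoetherianRing R]
    (hred : IsReduced (AdicCompletion (maximalIdeal R) R)) :
    IsReduced R ∧ Module.Finite R (integralClosure R (FractionRing R)) := by
  have hnoeth := completion_noeth R
  have hff : Module.FaithfullyFlat R (AdicCompletion (maximalIdeal R) R) :=
    Module.FaithfullyFlat.of_flat_of_isLocalHom
  refine ⟨?_, finite_descent R (AdicCompletion (maximalIdeal R) R)⟩
  exact isReduced_of_injective (algebraMap R (AdicCompletion (maximalIdeal R) R))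
    (FaithfulSMul.algebraMap_injective _ _)

end

section
open IsLocalRing

theorem exists_functional (R : Type) [CommRing R] [IsLocalRing R] (M : Type) [AddCommGroup M] [Module R M]
    (x y : M) (h : y ∉ Submodule.span R {x} ⊔ maximalIdeal R • (⊤ : Submodule R M)) :
    ∃ b : M →ₗ[R] (R ⧸ maximalIdeal R), b x = 0 ∧ b y ≠ 0 := by
  let _ : Field (R ⧸ maximalIdeal R) := Ideal.Quotient.field _
  let q := (maximalIdeal R • (⊤ : Submodule R M)).mkQ
  have hy : q y ∉ Submodule.span (R ⧸ maximalIdeal R) {q x} := by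
    intro hh
    obtain ⟨c, hc⟩ := Submodule.mem_span_singleton.1 hh
    obtain ⟨c, rfl⟩ := Ideal.Quotient.mk_surjective c
    have h1 : q (c • x) = q y := by rw [← hc, map_smul]; rfl
    have h2 : y - c • x ∈ maximalIdeal R • (⊤ : Submodule R M) := by
      rw [← Submodule.ker_mkQ (maximalIdeal R • (⊤ : Submodule R M)), LinearMap.mem_ker, map_sub, sub_eq_zero]
      exact h1.symm
    apply h
    have : y = c • x + (y - c • x) := by abel
    rw [this]
    exact Submodule.add_mem_sup (Submodule.smul_mem _ _ (Submodule.mem_span_singleton_self x)) h2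
  obtain ⟨f, hf, hk⟩ := Submodule.exists_le_ker_of_notMem hy
  refine ⟨(f.restrictScalars R).comp q, ?_, hf⟩
  exact hk (Submodule.mem_span_singleton_self _)

theorem swap_smul (R : Type) [CommRing R] (I : Ideal R) (n : ℕ) (hn : 1 < n) (t x y : I) (v : Fin n → I) :
    (t : R) • PiTensorProduct.tprod R (Function.update (Function.update v ⟨0, by omega⟩ x) ⟨1, hn⟩ y)
    = (t : R) • PiTensorProduct.tprod R (Function.update (Function.update v ⟨0, by omega⟩ y) ⟨1, hn⟩ x) := by
  have hne : (⟨0, by omega⟩ : Fin n) ≠ ⟨1, hn⟩ := by simp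
  have hc : ∀ a b : I, (a : R) • b = (b : R) • a := fun a b => Subtype.ext (mul_comm _ _)
  have key : ∀ x y : I, (t : R) • PiTensorProduct.tprod R (Function.update (Function.update v ⟨0, by omega⟩ x) ⟨1, hn⟩ y)
      = PiTensorProduct.tprod R (Function.update (Function.update v ⟨0, by omega⟩ t) ⟨1, hn⟩ ((x : R) • y)) := by
    intro x y
    rw [MultilinearMap.map_update_smul, Function.update_comm hne, ← MultilinearMap.map_update_smul, hc t x,
      MultilinearMap.map_update_smul, Function.update_comm hne.symm]
  rw [key, key, hc x y]

theorem principal_of_torsionFree (R : Type) [CommRing R] [IsLocalRing R] [IsNoetherianRing R] (I : Ideal R)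
    (t : R) (ht : t ∈ I) (htn : t ∈ nonZeroDivisors R) (n : ℕ) (hn : 1 < n)
    (htf : Submodule.torsion R (TensorPower R n I) = ⊥) :
    ∃ x : I, Submodule.span R {x} = ⊤ := by
  by_contra! hcon
  have nak : ∀ x : I, ∃ y : I, y ∉ Submodule.span R {x} ⊔ maximalIdeal R • (⊤ : Submodule R I) := by
    intro x
    by_contra! hh
    apply hcon x
    rw [eq_top_iff]
    refine Submodule.le_of_le_smul_of_le_jacobson_bot (I := maximalIdeal R) (IsNoetherian.noetherian _)
      (maximalIdeal_le_jacobson _) (fun z _ => hh z)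
  obtain ⟨x, hx⟩ := nak 0
  obtain ⟨y, hy⟩ := nak x
  obtain ⟨a, -, ha⟩ := exists_functional R I 0 x hx
  obtain ⟨b, hbx, hby⟩ := exists_functional R I x y hy
  have h1 := swap_smul R I n hn ⟨t, ht⟩ x y (fun _ => x)
  have h2 : PiTensorProduct.tprod R (Function.update (Function.update (fun _ => x) ⟨0, by omega⟩ x) ⟨1, hn⟩ y)
      - PiTensorProduct.tprod R (Function.update (Function.update (fun _ => x) ⟨0, by omega⟩ y) ⟨1, hn⟩ x)
      ∈ Submodule.torsion R (TensorPower R n I) := 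
    ⟨⟨t, htn⟩, (smul_sub (M := R) (A := TensorPower R n I) t _ _).trans (sub_eq_zero.2 h1)⟩
  rw [htf, Submodule.mem_bot, sub_eq_zero] at h2
  let F := PiTensorProduct.lift ((MultilinearMap.mkPiAlgebra R (Fin n) (R ⧸ maximalIdeal R)).compLinearMap
    (fun j => if j = ⟨1, hn⟩ then b else a))
  have h3 := congrArg F h2.symm
  simp only [F, PiTensorProduct.lift.tprod, MultilinearMap.compLinearMap_apply, MultilinearMap.mkPiAlgebra_apply] at h3
  rw [Finset.prod_eq_zero (i := ⟨1, hn⟩) (Finset.mem_univ _) (by simp [hbx])] at h3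
  rw [eq_comm, Finset.prod_eq_zero_iff] at h3
  obtain ⟨j, -, hj⟩ := h3
  by_cases hj1 : j = ⟨1, hn⟩
  · subst hj1
    simp at hj
    exact hby hj
  · rw [if_neg hj1, Function.update_of_ne hj1] at hj
    have hx0 : Function.update (fun _ : Fin n => x) ⟨0, by omega⟩ x j = x := by
      rw [Function.update_apply]; split_ifs <;> rfl
    rw [hx0] at hj
    exact ha hj

theorem final_step (R : Type) [CommRing R] [IsLocalRing R] [IsNoetherianRing R] (c : Ideal R)
    (hc : ∀ r, r ∈ c ↔ ∀ z ∈ integralClosure R (FractionRing R), ∃ s : R, algebraMap R (FractionRing R) r * z = algebraMap R _ s)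
    [Module.Finite R (integralClosure R (FractionRing R))] (n : ℕ) (hn : 1 < n)
    (htf : Submodule.torsion R (TensorPower R n c) = ⊥) :
    Module.Free R c ∧ integralClosure R (FractionRing R) = ⊥ := by
  obtain ⟨t, ht, htn⟩ : ∃ t ∈ c, t ∈ nonZeroDivisors R := by
    obtain ⟨s, hs⟩ := Module.Finite.fg_top (R := R) (M := integralClosure R (FractionRing R))
    classical
    obtain ⟨b, hb⟩ := IsLocalization.exist_integer_multiples_of_finset (nonZeroDivisors R)
      (s.image (Subtype.val))
    refine ⟨b, ?_, b.2⟩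
    rw [hc]
    intro y hy
    have : (⟨y, hy⟩ : integralClosure R (FractionRing R)) ∈ Submodule.span R (s : Set _) := by rw [hs]; trivial
    have key : ∀ z ∈ Submodule.span R (s : Set (integralClosure R (FractionRing R))), ∃ c : R, (b : R) • (z : FractionRing R) = algebraMap R _ c := by
      intro z hz
      induction hz using Submodule.span_induction with
      | mem z hz =>
        obtain ⟨c, hc⟩ := hb z.1 (Finset.mem_image_of_mem _ hz)
        exact ⟨c, hc.symm⟩
      | zero => exact ⟨0, by simp⟩
      | add u v _ _ hu hv =>
        obtain ⟨c, hc⟩ := hu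
        obtain ⟨d, hd⟩ := hv
        exact ⟨c + d, by simp [smul_add, hc, hd]⟩
      | smul a u _ hu =>
        obtain ⟨c, hc⟩ := hu
        exact ⟨a * c, by rw [map_mul, ← hc, ← Algebra.smul_def, smul_comm]; rfl⟩
    obtain ⟨c, hc⟩ := key _ this
    exact ⟨c, by rw [← hc, Algebra.smul_def]⟩
  obtain ⟨x, hx⟩ := principal_of_torsionFree R c t ht htn n hn htf
  have hgen : ∀ r ∈ c, ∃ s : R, s * x = r := by
    intro r hr
    have : (⟨r, hr⟩ : c) ∈ Submodule.span R {x} := by rw [hx]; trivial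
    obtain ⟨s, hs⟩ := Submodule.mem_span_singleton.1 this
    exact ⟨s, congrArg Subtype.val hs⟩
  have hxn : (x : R) ∈ nonZeroDivisors R := by
    obtain ⟨s, hs⟩ := hgen t ht
    rw [← hs] at htn
    exact (mul_mem_nonZeroDivisors.1 htn).2
  refine ⟨?_, ?_⟩
  · refine Module.Free.of_equiv (LinearEquiv.ofBijective (LinearMap.toSpanSingleton R c x) ⟨?_, ?_⟩)
    · intro u v huv
      have h1 : u * (x : R) = v * x := congrArg Subtype.val huv
      exact (mul_cancel_right_mem_nonZeroDivisors hxn).1 h1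
    · rintro ⟨r, hr⟩
      obtain ⟨s, hs⟩ := hgen r hr
      exact ⟨s, Subtype.ext hs⟩
  · rw [eq_bot_iff]
    intro z hz
    obtain ⟨r, hr⟩ := (hc x).1 x.2 z hz
    have hrc : r ∈ c := by
      rw [hc]
      intro w hw
      obtain ⟨s, hs⟩ := (hc x).1 x.2 (z * w) (mul_mem hz hw)
      exact ⟨s, by rw [← hr, mul_assoc, hs]⟩
    obtain ⟨s, hs⟩ := hgen r hrc
    rw [Algebra.mem_bot]
    refine ⟨s, ?_⟩
    have hu : IsUnit (algebraMap R (FractionRing R) x) := IsLocalization.map_units _ (⟨x, hxn⟩ : nonZeroDivisors R)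
    apply hu.mul_right_injective
    dsimp only
    rw [hr, ← hs, map_mul, mul_comm]

end

-- STATEMENT 8
theorem stmt8 (R : Type) [CommRing R] [IsLocalRing R] [IsNoetherianRing R]
    (hau : AnalyticallyUnramified R) (hS2 : SerreS2 R)
    (htf : ∃ i : ℕ, 1 < i ∧
      Submodule.torsion R (TensorPower R i ↥(conductorIdeal R)) = ⊥) :
    Module.Free R ↥(conductorIdeal R) ∧ IsNormalRing R := by
  obtain ⟨i, hi, ht⟩ := htf
  obtain ⟨hred, hfin⟩ := finite_intClosure R hau
  have hc : ∀ r, r ∈ conductorIdeal R ↔ ∀ z ∈ integralClosure R (FractionRing R),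
      ∃ s : R, algebraMap R (FractionRing R) r * z = algebraMap R _ s := by
    intro r
    rw [conductorIdeal, Module.mem_annihilator]
    constructor
    · intro h z hz
      have h1 := h (Submodule.Quotient.mk ⟨z, hz⟩)
      rw [← Submodule.Quotient.mk_smul, Submodule.Quotient.mk_eq_zero] at h1
      obtain ⟨s, hs⟩ := h1
      refine ⟨s, ?_⟩
      rw [← Algebra.smul_def]
      exact (congrArg Subtype.val hs).symm
    · intro h w
      obtain ⟨⟨z, hz⟩, rfl⟩ := Submodule.Quotient.mk_surjective _ w
      rw [← Submodule.Quotient.mk_smul, Submodule.Quotient.mk_eq_zero]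
      obtain ⟨s, hs⟩ := h z hz
      refine ⟨s, Subtype.ext ?_⟩
      rw [← Algebra.smul_def] at hs
      exact hs.symm
  obtain ⟨h1, h2⟩ := final_step R (conductorIdeal R) hc i hi ht
  exact ⟨h1, hred, h2⟩
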